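/- arXiv:2412.17233 — 2 statements merged into one kernel-verified Lean document; each statement's English description precedes it below -/
import Mathlib

section
/- Let A be an n×n real skew-symmetric matrix. Then A is totally positive, i.e. A ∈ S_n^{>0}, if and only if M_{j,k}(A) > 0 for all integers 1 ≤ j ≤ k ≤ n−1. -/
noncomputable section

open Matrix

/-- `N = n(n-1)/2`, the number of parameters. -/
def Npar (n : ℕ) : ℕ := n * (n - 1) / 2

/-- The decreasing run `a, a-1, …, b` (empty if `b > a`). -/
def decRun (a b : ℕ) : List ℕ := (List.range' b (a + 1 - b)).reverse

/-- The index sequence `(i_1, …, i_N)`: for `m = 1, …, ⌊n/2⌋` (here `m` is 0-based, so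
`m+1` is the 1-based block index), concatenate `n`, the run `n-2, …, 2(m+1)-1`, and the
run `n-1, …, 2(m+1)`. -/
def wordD (n : ℕ) : List ℕ :=
  ((List.range (n / 2)).map (fun m =>
    n :: (decRun (n - 2) (2 * m + 1) ++ decRun (n - 1) (2 * m + 2)))).flatten

/-- The matrix `x_i(t)` (index `i` is 1-based, matrix positions are 1-based in the paper,
0-based here). -/
def xMat (n : ℕ) (i : ℕ) (t : ℝ) : Matrix (Fin (2 * n)) (Fin (2 * n)) ℝ :=
  Matrix.of fun p q =>
    (if (p : ℕ) = (q : ℕ) then 1 else 0) +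
    (if i < n then
        (if (p : ℕ) + 1 = i ∧ (q : ℕ) + 1 = i + 1 then t else 0)
      + (if (p : ℕ) + 1 = n + i + 1 ∧ (q : ℕ) + 1 = n + i then -t else 0)
     else
        (if (p : ℕ) + 1 = n - 1 ∧ (q : ℕ) + 1 = 2 * n then t else 0)
      + (if (p : ℕ) + 1 = n ∧ (q : ℕ) + 1 = 2 * n - 1 then -t else 0))

/-- The product `x_{i_1}(t_1) ⋯ x_{i_N}(t_N)`; the parameter `t l` plays the role of
`t_{l+1}`. -/
def prodX (n : ℕ) (t : ℕ → ℝ) : Matrix (Fin (2 * n)) (Fin (2 * n)) ℝ :=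
  ((List.range (Npar n)).map (fun l => xMat n ((wordD n).getD l 0) (t l))).prod

/-- The first block `X₁(t)` of the first `n` rows of the product. -/
def X1 (n : ℕ) (t : ℕ → ℝ) : Matrix (Fin n) (Fin n) ℝ :=
  Matrix.of fun p q =>
    prodX n t ⟨(p : ℕ), by have := p.isLt; omega⟩ ⟨(q : ℕ), by have := q.isLt; omega⟩

/-- The second block `X₂(t)` of the first `n` rows of the product. -/
def X2 (n : ℕ) (t : ℕ → ℝ) : Matrix (Fin n) (Fin n) ℝ :=
  Matrix.of fun p q =>
    prodX n t ⟨(p : ℕ), by have := p.isLt; omega⟩ ⟨n + (q : ℕ), by have := q.isLt; omega⟩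

/-- The skew-symmetric matrix `A(t) = X₁(t)⁻¹ · X₂(t)`. -/
def Amat (n : ℕ) (t : ℕ → ℝ) : Matrix (Fin n) (Fin n) ℝ := (X1 n t)⁻¹ * X2 n t

/-- The set `S_n^{>0}` of totally positive skew-symmetric matrices. -/
def Spos (n : ℕ) : Set (Matrix (Fin n) (Fin n) ℝ) :=
  { A | ∃ t : ℕ → ℝ, (∀ i < Npar n, 0 < t i) ∧ A = Amat n t }

/-- The signed minor `M_{j,k}(A)`: `(-1)^{jk}` times the determinant of the submatrix of `A`
with (1-based) rows `{1,…,n-k-1} ∪ {n-k+j,…,n}` and columns `{1,…,n-j}`. -/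
def Mminor (n j k : ℕ) (A : Matrix (Fin n) (Fin n) ℝ) : ℝ :=
  (-1 : ℝ) ^ (j * k) *
    Matrix.det (Matrix.of fun (p q : Fin (n - j)) =>
      A (if (p : ℕ) < n - k - 1
          then ⟨(p : ℕ), by have := p.isLt; omega⟩
          else ⟨(p : ℕ) + j, by have := p.isLt; omega⟩)
        ⟨(q : ℕ), by have := q.isLt; omega⟩)

/-- The Pfaffian of an `m × m` matrix (intended for `m` even):
`Pf(B) = (1/(2^{m/2} (m/2)!)) Σ_σ sgn(σ) Π_i B_{σ(2i-1), σ(2i)}`. -/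
def Pfaff {m : ℕ} (B : Matrix (Fin m) (Fin m) ℝ) : ℝ :=
  (1 / ((2 : ℝ) ^ (m / 2) * (Nat.factorial (m / 2) : ℝ))) *
    ∑ σ : Equiv.Perm (Fin m), ((Equiv.Perm.sign σ : ℤ) : ℝ) *
      ∏ i : Fin (m / 2),
        B (σ ⟨2 * (i : ℕ), by have := i.isLt; omega⟩)
          (σ ⟨2 * (i : ℕ) + 1, by have := i.isLt; omega⟩)

/-- `Pf_I(A)`: the Pfaffian of the submatrix of `A` with rows and columns indexed by `I`
in increasing order. -/
def PfI {n : ℕ} (A : Matrix (Fin n) (Fin n) ℝ) (I : Finset (Fin n)) : ℝ :=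
  Pfaff (Matrix.of fun (p q : Fin I.card) =>
    A ((I.orderIsoOfFin rfl p : Fin n)) ((I.orderIsoOfFin rfl q : Fin n)))

/-- `sgn(I,[n]) = (-1)^{(Σ_{i∈I} i) - |I|(|I|+1)/2}` (the elements of `I` are 1-based, so a
0-based element `i` contributes `i+1`; the natural subtraction agrees with the integer one
since the sum of `|I|` distinct positive integers is at least `|I|(|I|+1)/2`). -/
def sgnSet {n : ℕ} (I : Finset (Fin n)) : ℝ :=
  (-1 : ℝ) ^ ((∑ i ∈ I, ((i : ℕ) + 1)) - I.card * (I.card + 1) / 2)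

/-- The block matrix `[Id_n | A]`. -/
def IdA {n : ℕ} (A : Matrix (Fin n) (Fin n) ℝ) : Matrix (Fin n) (Fin (2 * n)) ℝ :=
  Matrix.of fun p q =>
    if h : (q : ℕ) < n then (if (p : ℕ) = (q : ℕ) then 1 else 0)
    else A p ⟨(q : ℕ) - n, by have := q.isLt; omega⟩

/-- The full word `(j_1, …, j_{2N})`: `1, 2,1, 3,2,1, …, n-1,…,1` followed by `(i_1,…,i_N)`. -/
def wordFull (n : ℕ) : List ℕ :=
  (((List.range n).map (fun r => decRun r 1)).flatten) ++ wordD n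

/-- `z(ε) = x_{j_1}(ε) ⋯ x_{j_{2N}}(ε)`. -/
def zeps (n : ℕ) (ε : ℝ) : Matrix (Fin (2 * n)) (Fin (2 * n)) ℝ :=
  ((wordFull n).map (fun i => xMat n i ε)).prod

/-- `Z(ε) = z(ε)ᵀ · z(ε)`. -/
def Zeps (n : ℕ) (ε : ℝ) : Matrix (Fin (2 * n)) (Fin (2 * n)) ℝ :=
  (zeps n ε)ᵀ * zeps n ε

/-- First block `Y₁(ε)` of `[Id_n | A] · Z(ε)`. -/
def Y1 {n : ℕ} (A : Matrix (Fin n) (Fin n) ℝ) (ε : ℝ) : Matrix (Fin n) (Fin n) ℝ :=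
  Matrix.of fun p q => (IdA A * Zeps n ε) p ⟨(q : ℕ), by have := q.isLt; omega⟩

/-- Second block `Y₂(ε)` of `[Id_n | A] · Z(ε)`. -/
def Y2 {n : ℕ} (A : Matrix (Fin n) (Fin n) ℝ) (ε : ℝ) : Matrix (Fin n) (Fin n) ℝ :=
  Matrix.of fun p q => (IdA A * Zeps n ε) p ⟨n + (q : ℕ), by have := q.isLt; omega⟩

/-- The simple generators `s_i` of the Weyl group `W` of `SO(2n)`, as permutations of
`{1,…,2n}` (0-based here): for `1 ≤ i ≤ n-1`, `s_i = (i,i+1)(n+i,n+i+1)`; for `i = n`,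
`s_n = (n,2n-1)(n-1,2n)`. -/
def sGen (n : ℕ) (i : ℕ) : Equiv.Perm (Fin (2 * n)) :=
  if h : 1 ≤ i ∧ i ≤ n - 1 ∧ 2 ≤ n then
    Equiv.swap ⟨i - 1, by omega⟩ ⟨i, by omega⟩ *
      Equiv.swap ⟨n + i - 1, by omega⟩ ⟨n + i, by omega⟩
  else if h2 : i = n ∧ 2 ≤ n then
    Equiv.swap ⟨n - 1, by omega⟩ ⟨2 * n - 2, by omega⟩ *
      Equiv.swap ⟨n - 2, by omega⟩ ⟨2 * n - 1, by omega⟩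
  else 1

/-- Membership in the Weyl group `W`: `σ(n+i) ≡ n + σ(i) (mod 2n)` for all `1 ≤ i ≤ n`,
and the number of `i ∈ {1,…,n}` with `σ(i) > n` is even. (All positions are 0-based; a
0-based value `v` corresponds to the 1-based value `v+1`.) -/
def inW (n : ℕ) (σ : Equiv.Perm (Fin (2 * n))) : Prop :=
  (∀ i : Fin n,
    ((σ ⟨n + (i : ℕ), by have := i.isLt; omega⟩ : Fin (2 * n)) : ℕ)
      ≡ n + ((σ ⟨(i : ℕ), by have := i.isLt; omega⟩ : Fin (2 * n)) : ℕ) [MOD 2 * n]) ∧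
  Even (Finset.univ.filter (fun i : Fin n =>
    n ≤ ((σ ⟨(i : ℕ), by have := i.isLt; omega⟩ : Fin (2 * n)) : ℕ))).card

/-- `I_w = {i ∈ {1,…,n} : w(i) > n}`, as a finset of `Fin n` (0-based). -/
def Iset (n : ℕ) (σ : Equiv.Perm (Fin (2 * n))) : Finset (Fin n) :=
  Finset.univ.filter (fun i : Fin n =>
    n ≤ ((σ ⟨(i : ℕ), by have := i.isLt; omega⟩ : Fin (2 * n)) : ℕ))

/-- The parabolic subgroup `W_{[n-1]}` generated by `s_1, …, s_{n-1}`. -/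
def Wpar (n : ℕ) : Subgroup (Equiv.Perm (Fin (2 * n))) :=
  Subgroup.closure { σ | ∃ i, 1 ≤ i ∧ i ≤ n - 1 ∧ σ = sGen n i }

/-- The standard basis vector `e_i` of `ℝ^{2n}` (with `i : Fin n` 0-based, sitting in
position `i` of the first block). -/
def evec (n : ℕ) (i : Fin n) : Fin (2 * n) → ℝ :=
  Pi.single ⟨(i : ℕ), by have := i.isLt; omega⟩ 1

/-- The standard basis vector `f_j` of `ℝ^{2n}` (position `n + j`). -/
def fvec (n : ℕ) (j : Fin n) : Fin (2 * n) → ℝ :=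
  Pi.single ⟨n + (j : ℕ), by have := j.isLt; omega⟩ 1

/-- `f = ι(f_1)⋯ι(f_n)` in the Clifford algebra. -/
def fElt {n : ℕ} (Q : QuadraticForm ℝ (Fin (2 * n) → ℝ)) : CliffordAlgebra Q :=
  (List.ofFn (fun j : Fin n => CliffordAlgebra.ι Q (fvec n j))).prod

/-- `e_S = ι(e_{l_1})⋯ι(e_{l_s})` where `l_1 < ⋯ < l_s` enumerates `S`. -/
def eProd {n : ℕ} (Q : QuadraticForm ℝ (Fin (2 * n) → ℝ)) (S : Finset (Fin n)) :
    CliffordAlgebra Q :=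
  ((S.sort (· ≤ ·)).map (fun l => CliffordAlgebra.ι Q (evec n l))).prod

/-- `h = Π_{i=1}^n ι(e_i + Σ_j A_{ij} f_j)` (product in increasing order of `i`). -/
def hElt {n : ℕ} (Q : QuadraticForm ℝ (Fin (2 * n) → ℝ)) (A : Matrix (Fin n) (Fin n) ℝ) :
    CliffordAlgebra Q :=
  (List.ofFn (fun i : Fin n =>
    CliffordAlgebra.ι Q (evec n i + ∑ j : Fin n, A i j • fvec n j))).prod

/-- The sorted list of the (1-based) elements of `S ⊆ {1,…,n}`. -/
def valsOf {n : ℕ} (S : Finset (Fin n)) : List ℕ :=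
  (S.sort (· ≤ ·)).map (fun i => (i : ℕ) + 1)

/-- The word `w_1 w_2 ⋯ w_r` where
`w_m = s_n (s_{n-2}⋯s_{i_{2m-1}}) (s_{n-1}⋯s_{i_{2m}})` and `vals` lists `i_1 < i_2 < ⋯`
(1-based); `m` is 0-based here. -/
def uWord (n r : ℕ) (vals : List ℕ) : List ℕ :=
  ((List.range r).map (fun m =>
    n :: (decRun (n - 2) (vals.getD (2 * m) 0) ++ decRun (n - 1) (vals.getD (2 * m + 1) 0)))).flatten

/-- The permutation `u = w_1 w_2 ⋯ w_r`. -/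
def uPerm (n r : ℕ) (vals : List ℕ) : Equiv.Perm (Fin (2 * n)) :=
  ((uWord n r vals).map (sGen n)).prod

/-- `L = r + Σ_{m=1}^{r} ((n-1-i_{2m-1}) + (n-i_{2m}))`. -/
def Lval (n r : ℕ) (vals : List ℕ) : ℕ :=
  r + ∑ m ∈ Finset.range r, ((n - 1 - vals.getD (2 * m) 0) + (n - vals.getD (2 * m + 1) 0))


/-! ### generic matrix helpers -/

def ext1 {n : ℕ} (c : ℝ) (M : Matrix (Fin n) (Fin n) ℝ) :
    Matrix (Fin (n+1)) (Fin (n+1)) ℝ :=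
  fun p q => Fin.cases (Fin.cases c (fun _ => 0) q)
    (fun i => Fin.cases 0 (fun j => M i j) q) p

@[simp] lemma ext1_00 {n : ℕ} (c : ℝ) (M : Matrix (Fin n) (Fin n) ℝ) : ext1 c M 0 0 = c := rfl
@[simp] lemma ext1_0s {n : ℕ} (c : ℝ) (M : Matrix (Fin n) (Fin n) ℝ) (j : Fin n) :
    ext1 c M 0 j.succ = 0 := rfl
@[simp] lemma ext1_s0 {n : ℕ} (c : ℝ) (M : Matrix (Fin n) (Fin n) ℝ) (j : Fin n) :
    ext1 c M j.succ 0 = 0 := rfl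
@[simp] lemma ext1_ss {n : ℕ} (c : ℝ) (M : Matrix (Fin n) (Fin n) ℝ) (i j : Fin n) :
    ext1 c M i.succ j.succ = M i j := rfl

lemma ext1_mul {n : ℕ} (c d : ℝ) (M N : Matrix (Fin n) (Fin n) ℝ) :
    ext1 c M * ext1 d N = ext1 (c * d) (M * N) := by
  ext p q
  refine Fin.cases ?_ (fun p => ?_) p <;> refine Fin.cases ?_ (fun q => ?_) q <;>
    simp [Matrix.mul_apply, Fin.sum_univ_succ]

lemma ext1_add {n : ℕ} (c d : ℝ) (M N : Matrix (Fin n) (Fin n) ℝ) :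
    ext1 c M + ext1 d N = ext1 (c + d) (M + N) := by
  ext p q
  refine Fin.cases ?_ (fun p => ?_) p <;> refine Fin.cases ?_ (fun q => ?_) q <;> simp

lemma ext1_one {n : ℕ} : ext1 1 (1 : Matrix (Fin n) (Fin n) ℝ) = 1 := by
  ext p q
  refine Fin.cases ?_ (fun p => ?_) p <;> refine Fin.cases ?_ (fun q => ?_) q <;>
    simp [Matrix.one_apply, Fin.succ_ne_zero, (Fin.succ_ne_zero _).symm]

lemma ext1_zero {n : ℕ} : ext1 0 (0 : Matrix (Fin n) (Fin n) ℝ) = 0 := by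
  ext p q
  refine Fin.cases ?_ (fun p => ?_) p <;> refine Fin.cases ?_ (fun q => ?_) q <;> simp

lemma ext1_transpose {n : ℕ} (c : ℝ) (M : Matrix (Fin n) (Fin n) ℝ) :
    (ext1 c M)ᵀ = ext1 c Mᵀ := by
  ext p q
  refine Fin.cases ?_ (fun p => ?_) p <;> refine Fin.cases ?_ (fun q => ?_) q <;> simp

/-- extension by an identity block -/
def exI {n : ℕ} (M : Matrix (Fin n) (Fin n) ℝ) : Matrix (Fin (n+2)) (Fin (n+2)) ℝ :=
  ext1 1 (ext1 1 M)
/-- extension by a zero block -/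
def exZ {n : ℕ} (M : Matrix (Fin n) (Fin n) ℝ) : Matrix (Fin (n+2)) (Fin (n+2)) ℝ :=
  ext1 0 (ext1 0 M)

lemma exI_mul {n : ℕ} (M N : Matrix (Fin n) (Fin n) ℝ) : exI M * exI N = exI (M * N) := by
  simp [exI, ext1_mul]
lemma exI_mul_exZ {n : ℕ} (M N : Matrix (Fin n) (Fin n) ℝ) : exI M * exZ N = exZ (M * N) := by
  simp [exI, exZ, ext1_mul]
lemma exI_one {n : ℕ} : exI (1 : Matrix (Fin n) (Fin n) ℝ) = 1 := by simp [exI, ext1_one]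

def UT {n : ℕ} (U : Matrix (Fin n) (Fin n) ℝ) : Prop :=
  (∀ p q, q < p → U p q = 0) ∧ ∀ p, U p p = 1

lemma UT.mul {n : ℕ} {U V : Matrix (Fin n) (Fin n) ℝ} (hU : UT U) (hV : UT V) : UT (U * V) := by
  constructor
  · intro p q h
    rw [Matrix.mul_apply]
    refine Finset.sum_eq_zero fun k _ => ?_
    by_cases hk : k < p
    · rw [hU.1 _ _ hk, zero_mul]
    · rw [hV.1 k q (by omega), mul_zero]
  · intro p
    rw [Matrix.mul_apply, Finset.sum_eq_single p]
    · rw [hU.2, hV.2, one_mul]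
    · intro k _ hk
      by_cases hk' : k < p
      · rw [hU.1 _ _ hk', zero_mul]
      · rw [hV.1 k p (by omega), mul_zero]
    · simp

lemma UT.ext1 {n : ℕ} {U : Matrix (Fin n) (Fin n) ℝ} (hU : UT U) : UT (ext1 1 U) := by
  constructor
  · intro p q
    refine Fin.cases ?_ (fun p => ?_) p <;> refine Fin.cases ?_ (fun q => ?_) q <;> simp
    exact hU.1 p q
  · intro p
    refine Fin.cases ?_ (fun p => ?_) p <;> simp
    exact hU.2 p

lemma UT.exI {n : ℕ} {U : Matrix (Fin n) (Fin n) ℝ} (hU : UT U) : UT (exI U) := hU.ext1.ext1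

lemma UT.det {n : ℕ} {U : Matrix (Fin n) (Fin n) ℝ} (hU : UT U) : U.det = 1 := by
  rw [Matrix.det_of_isUpperTriangular]
  · simp [hU.2]
  · intro p q h
    exact hU.1 p q h

/-- minors on a row set compatible with `U` are unchanged under multiplication by `U` -/
lemma det_UT_minor {n m : ℕ} {U : Matrix (Fin n) (Fin n) ℝ} (hU : UT U)
    (A : Matrix (Fin n) (Fin n) ℝ) (f : Fin m → Fin n) (g : Fin m → Fin n)
    (hf : StrictMono f) (hr : ∀ p q, q ∉ Set.range f → U (f p) q = 0) :
    ((U * A).submatrix f g).det = (A.submatrix f g).det := by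
  have h : (U * A).submatrix f g = U.submatrix f f * A.submatrix f g := by
    ext p q
    simp only [Matrix.submatrix_apply, Matrix.mul_apply]
    rw [← Finset.sum_image (s := Finset.univ) (g := f) (f := fun k => U (f p) k * A k (g q))
      (by intro a _ b _ hab; exact hf.injective hab)]
    symm
    apply Finset.sum_subset (Finset.subset_univ _)
    intro k _ hk
    rw [hr p k, zero_mul]
    rintro ⟨x, rfl⟩
    exact hk (Finset.mem_image_of_mem _ (Finset.mem_univ _))
  rw [h, Matrix.det_mul]
  have : UT (U.submatrix f f) := ⟨fun p q h => hU.1 _ _ (hf h), fun p => hU.2 _⟩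
  rw [this.det, one_mul]

lemma det_two {m : ℕ} (M : Matrix (Fin (m+2)) (Fin (m+2)) ℝ)
    (h0 : ∀ q : Fin m, M 0 q.succ.succ = 0) (h1 : ∀ q : Fin m, M 1 q.succ.succ = 0) :
    M.det = (M 0 0 * M 1 1 - M 0 1 * M 1 0) *
      (M.submatrix (fun p : Fin m => p.succ.succ) (fun p : Fin m => p.succ.succ)).det := by
  have key : ∀ N : Matrix (Fin (m+1)) (Fin (m+1)) ℝ, (∀ q : Fin m, N 0 q.succ = 0) →
      N.det = N 0 0 * (N.submatrix Fin.succ Fin.succ).det := by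
    intro N hN
    rw [Matrix.det_succ_row_zero, Fin.sum_univ_succ]
    simp [hN]
  rw [Matrix.det_succ_row_zero, Fin.sum_univ_succ, Fin.sum_univ_succ]
  have hz : ∀ i : Fin m, M 0 i.succ.succ = 0 := h0
  simp only [hz]
  rw [key (M.submatrix Fin.succ (Fin.succAbove 0)), key (M.submatrix Fin.succ (Fin.succAbove (Fin.succ 0)))]
  · have e1 : (Fin.succAbove (Fin.succ (0 : Fin (m+1)))) ∘ Fin.succ = fun p : Fin m => p.succ.succ := by
      funext p; simp
    simp only [Matrix.submatrix_submatrix, e1]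
    simp [Function.comp_def]
    ring
  · intro q
    have := h1 q
    simpa using this
  · intro q
    have := h1 q
    simpa using this

/-- reduce columns by the first two -/
lemma det_col_red {m : ℕ} (Y Z : Matrix (Fin (m+2)) (Fin (m+2)) ℝ) (α β : Fin m → ℝ)
    (h0 : ∀ p, Y p 0 = Z p 0) (h1 : ∀ p, Y p 1 = Z p 1)
    (h : ∀ p (q : Fin m), Y p q.succ.succ = Z p q.succ.succ + α q * Z p 0 + β q * Z p 1) :
    Y.det = Z.det := by
  rw [← Matrix.det_transpose Y, ← Matrix.det_transpose Z]
  let W : Matrix (Fin (m+2)) (Fin (m+2)) ℝ := fun q p =>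
    Z p q + (Fin.cases 0 (Fin.cases 0 α) q : ℝ) * Z p 0
  have hW : W.det = Zᵀ.det :=
    Matrix.det_eq_of_forall_row_eq_smul_add_const (Fin.cases 0 (Fin.cases 0 α)) 0 rfl
      (fun i j => rfl)
  rw [← hW]
  refine Matrix.det_eq_of_forall_row_eq_smul_add_const (Fin.cases 0 (Fin.cases 0 β)) 1 rfl ?_
  intro q p
  have hW1 : W 1 p = Z p 1 := by
    show Z p 1 + 0 * Z p 0 = Z p 1
    ring
  rw [hW1, Matrix.transpose_apply]
  refine Fin.cases ?_ (fun q => Fin.cases ?_ (fun q => ?_) q) q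
  · rw [h0]; show _ = Z p 0 + 0 * Z p 0 + 0 * _; ring
  · show Y p 1 = Z p 1 + 0 * Z p 0 + 0 * _; rw [h1]; ring
  · exact h p q

/-! ### minors -/

lemma Mminor_eq {n j k m : ℕ} (h : m = n - j) (A : Matrix (Fin n) (Fin n) ℝ) :
    Mminor n j k A = (-1 : ℝ) ^ (j * k) * (A.submatrix
      (fun p : Fin m => (if (p : ℕ) < n - k - 1
          then ⟨(p : ℕ), by have := p.isLt; omega⟩
          else ⟨(p : ℕ) + j, by have := p.isLt; omega⟩ : Fin n))
      (fun q : Fin m => ⟨(q : ℕ), by have := q.isLt; omega⟩)).det := by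
  subst h; rfl

lemma exZ_ss {n : ℕ} (M : Matrix (Fin n) (Fin n) ℝ) (p q : Fin n) :
    exZ M p.succ.succ q.succ.succ = M p q := rfl
lemma exZ_r0 {n : ℕ} (M : Matrix (Fin n) (Fin n) ℝ) (q : Fin (n+2)) : exZ M 0 q = 0 := by
  refine Fin.cases rfl (fun q => rfl) q
lemma exZ_r1 {n : ℕ} (M : Matrix (Fin n) (Fin n) ℝ) (q : Fin (n+2)) : exZ M 1 q = 0 := by
  refine Fin.cases rfl (fun q => Fin.cases rfl (fun q => rfl) q) q
lemma exZ_c0 {n : ℕ} (M : Matrix (Fin n) (Fin n) ℝ) (q : Fin (n+2)) : exZ M q 0 = 0 := by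
  refine Fin.cases rfl (fun q => rfl) q
lemma exZ_c1 {n : ℕ} (M : Matrix (Fin n) (Fin n) ℝ) (q : Fin (n+2)) : exZ M q 1 = 0 := by
  refine Fin.cases rfl (fun q => Fin.cases rfl (fun q => rfl) q) q
lemma exI_r0 {n : ℕ} (M : Matrix (Fin n) (Fin n) ℝ) (q : Fin (n+2)) :
    exI M 0 q = if q = 0 then 1 else 0 := by
  refine Fin.cases rfl (fun q => rfl) q
lemma exI_r1 {n : ℕ} (M : Matrix (Fin n) (Fin n) ℝ) (q : Fin (n+2)) :
    exI M 1 q = if q = 1 then 1 else 0 := by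
  refine Fin.cases rfl (fun q => Fin.cases rfl (fun q => rfl) q) q

/-- vanishing above the antidiagonal -/
def AL {n : ℕ} (X : Matrix (Fin n) (Fin n) ℝ) : Prop :=
  ∀ p q : Fin n, (p : ℕ) + q + 1 < n → X p q = 0

lemma AL_exZ {n : ℕ} {X : Matrix (Fin n) (Fin n) ℝ} (hX : AL X) (p q : Fin (n+2))
    (h : (p : ℕ) + q < n + 3) : exZ X p q = 0 := by
  revert h
  refine Fin.cases (fun _ => exZ_r0 _ _) (fun p => Fin.cases (fun _ => exZ_r1 _ _) (fun p => ?_) p) p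
  refine Fin.cases (fun _ => exZ_c0 _ _) (fun q => Fin.cases (fun _ => exZ_c1 _ _) (fun q => ?_) q) q
  intro h
  rw [exZ_ss]
  apply hX
  simp at h
  omega

lemma K_gen {n m : ℕ} (Y : Matrix (Fin (n+2)) (Fin (n+2)) ℝ)
    (X : Matrix (Fin n) (Fin n) ℝ) (α β : Fin (n+2) → ℝ)
    (hY : ∀ p q, Y p q = exZ X p q + α q * Y p 0 + β q * Y p 1)
    (f : Fin (m+2) → Fin (n+2)) (g : Fin (m+2) → Fin (n+2))
    (hg : ∀ q, (g q : ℕ) = q) (f' g' : Fin m → Fin n)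
    (hf' : ∀ p : Fin m, f p.succ.succ = (f' p).succ.succ)
    (hg' : ∀ p : Fin m, (g' p : ℕ) = p)
    (h0 : ∀ q : Fin m, exZ X (f 0) (g q.succ.succ) = 0)
    (h1 : ∀ q : Fin m, exZ X (f 1) (g q.succ.succ) = 0) :
    (Y.submatrix f g).det = (Y (f 0) 0 * Y (f 1) 1 - Y (f 0) 1 * Y (f 1) 0) *
      (X.submatrix f' g').det := by
  have g0 : g 0 = 0 := by ext; simp [hg]
  have g1 : g 1 = 1 := by ext; simp [hg]
  have gs : ∀ q : Fin m, g q.succ.succ = (g' q).succ.succ := by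
    intro q; ext; simp [hg, hg']
  let Z : Matrix (Fin (m+2)) (Fin (m+2)) ℝ := fun p q =>
    Fin.cases (Y (f p) 0) (Fin.cases (Y (f p) 1) (fun q => exZ X (f p) (g q.succ.succ))) q
  have e : (Y.submatrix f g).det = Z.det := by
    apply det_col_red _ _ (fun q => α (g q.succ.succ)) (fun q => β (g q.succ.succ))
    · intro p; simp [g0, Z]
    · intro p; simp only [Matrix.submatrix_apply, g1]; rfl
    · intro p q
      rw [Matrix.submatrix_apply, hY]; rfl
  rw [e, det_two Z h0 h1]
  congr 2
  ext p q
  show exZ X (f p.succ.succ) (g q.succ.succ) = _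
  rw [hf', gs, exZ_ss]; rfl

/-- the rank two identity -/
def Schur {n : ℕ} (M : Matrix (Fin (n+2)) (Fin (n+2)) ℝ) : Prop :=
  M 0 1 • M = Matrix.vecMulVec (M 0) (M 1) - Matrix.vecMulVec (M 1) (M 0)


lemma skew_apply {n : ℕ} {A : Matrix (Fin n) (Fin n) ℝ} (hA : Aᵀ = -A) (p q : Fin n) :
    A p q = - A q p := by
  have := congrFun (congrFun hA q) p
  simpa using this

lemma schur_apply {n : ℕ} (A : Matrix (Fin (n+2)) (Fin (n+2)) ℝ) (A' : Matrix (Fin n) (Fin n) ℝ)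
    (ha : A 0 1 ≠ 0) (hS : Schur (A - exZ A')) (p q : Fin (n+2)) :
    A p q = exZ A' p q + (A 0 p * A 1 q - A 1 p * A 0 q) / A 0 1 := by
  have := congrFun (congrFun hS p) q
  simp only [Matrix.smul_apply, Matrix.sub_apply, Matrix.vecMulVec_apply, exZ_r0, exZ_r1,
    sub_zero, smul_eq_mul] at this
  field_simp
  linarith

lemma schur_col {n : ℕ} (A : Matrix (Fin (n+2)) (Fin (n+2)) ℝ) (hA : Aᵀ = -A) (A' : Matrix (Fin n) (Fin n) ℝ)
    (ha : A 0 1 ≠ 0) (hS : Schur (A - exZ A')) (p q : Fin (n+2)) :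
    A p q = exZ A' p q + (-A 1 q / A 0 1) * A p 0 + (A 0 q / A 0 1) * A p 1 := by
  have := schur_apply A A' ha hS p q
  rw [skew_apply hA p 0, skew_apply hA p 1, this]
  ring

lemma schur_col_U {n : ℕ} (A : Matrix (Fin (n+2)) (Fin (n+2)) ℝ) (hA : Aᵀ = -A) (A' : Matrix (Fin n) (Fin n) ℝ) (U : Matrix (Fin n) (Fin n) ℝ)
    (ha : A 0 1 ≠ 0) (hS : Schur (A - exZ A')) (p q : Fin (n+2)) :
    (exI U * A) p q = exZ (U * A') p q + (-A 1 q / A 0 1) * (exI U * A) p 0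
      + (A 0 q / A 0 1) * (exI U * A) p 1 := by
  rw [← exI_mul_exZ]
  simp only [Matrix.mul_apply, Finset.mul_sum, ← Finset.sum_add_distrib]
  refine Finset.sum_congr rfl fun k _ => ?_
  rw [schur_col A hA A' ha hS k q]
  ring

lemma UA_c0 {n : ℕ} (A : Matrix (Fin (n+2)) (Fin (n+2)) ℝ) (hA : Aᵀ = -A) (U : Matrix (Fin n) (Fin n) ℝ)
    (p : Fin (n+2)) : (exI U * A) p 0 = - (exI U *ᵥ A 0) p := by
  simp only [Matrix.mul_apply, Matrix.mulVec, dotProduct, ← Finset.sum_neg_distrib]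
  refine Finset.sum_congr rfl fun k _ => ?_
  rw [skew_apply hA k 0]; ring

lemma UA_c1 {n : ℕ} (A : Matrix (Fin (n+2)) (Fin (n+2)) ℝ) (hA : Aᵀ = -A) (U : Matrix (Fin n) (Fin n) ℝ)
    (p : Fin (n+2)) : (exI U * A) p 1 = - (exI U *ᵥ A 1) p := by
  simp only [Matrix.mul_apply, Matrix.mulVec, dotProduct, ← Finset.sum_neg_distrib]
  refine Finset.sum_congr rfl fun k _ => ?_
  rw [skew_apply hA k 1]; ring

lemma K1 {n : ℕ} (A : Matrix (Fin (n+2)) (Fin (n+2)) ℝ) (hA : Aᵀ = -A) (A' : Matrix (Fin n) (Fin n) ℝ)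
    (ha : A 0 1 ≠ 0) (hS : Schur (A - exZ A')) {j k : ℕ} (hjk : j ≤ k)
    (hk : k + 1 ≤ n) : Mminor (n+2) j k A = (A 0 1)^2 * Mminor n j k A' := by
  obtain ⟨m, hm⟩ : ∃ m, m = n - j := ⟨_, rfl⟩
  rw [Mminor_eq (m := m + 2) (by omega), Mminor_eq hm]
  rw [K_gen (m := m) A A' _ _ (schur_col A hA A' ha hS) _ _ ?_
    (fun p : Fin m => (if (p : ℕ) < n - k - 1
          then ⟨(p : ℕ), by have := p.isLt; omega⟩
          else ⟨(p : ℕ) + j, by have := p.isLt; omega⟩ : Fin n))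
    (fun q : Fin m => ⟨(q : ℕ), by have := q.isLt; omega⟩) ?_ (fun _ => rfl) ?_ ?_]
  · have e0 : 0 < n + 2 - k - 1 := by omega
    have e1 : 1 < n + 2 - k - 1 := by omega
    have h00 : A 0 0 = 0 := by have := skew_apply hA 0 0; linarith
    have h11 : A 1 1 = 0 := by have := skew_apply hA 1 1; linarith
    have h10 : A 1 0 = - A 0 1 := skew_apply hA 1 0
    simp only [Fin.val_zero, Fin.val_one, e0, e1, if_true]
    simp only [show (⟨0, by omega⟩ : Fin (n+2)) = 0 from rfl,
      show (⟨1, by omega⟩ : Fin (n+2)) = 1 from rfl, h00, h11, h10]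
    ring
  · intro q; rfl
  · intro p
    ext
    simp only [Fin.val_succ]
    by_cases h : (p : ℕ) < n - k - 1
    · rw [if_pos (by omega), if_pos h]
    · rw [if_neg (by omega), if_neg h]; simp; try omega
  · intro q
    have e0 : 0 < n + 2 - k - 1 := by omega
    simp only [Fin.val_zero, e0, if_true]
    exact exZ_r0 _ _
  · intro q
    have e0 : 1 < n + 2 - k - 1 := by omega
    simp only [Fin.val_one, e0, if_true]
    exact exZ_r1 _ _

lemma corner_UT {n m j : ℕ} {U A : Matrix (Fin n) (Fin n) ℝ} (hU : UT U) (hm : m = n - j) :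
    ((U * A).submatrix (fun p : Fin m => (⟨(p : ℕ) + j, by have := p.isLt; omega⟩ : Fin n))
      (fun q : Fin m => (⟨(q : ℕ), by have := q.isLt; omega⟩ : Fin n))).det =
    (A.submatrix (fun p : Fin m => (⟨(p : ℕ) + j, by have := p.isLt; omega⟩ : Fin n))
      (fun q : Fin m => (⟨(q : ℕ), by have := q.isLt; omega⟩ : Fin n))).det := by
  apply det_UT_minor hU
  · intro p q h
    simpa using h
  · intro p q hq
    apply hU.1
    by_contra hlt
    apply hq
    have h1 := q.isLt
    rw [Fin.lt_def, not_lt] at hlt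
    simp only at hlt
    exact ⟨⟨(q : ℕ) - j, by omega⟩, by ext; simp; omega⟩

lemma Mminor_corner {n m j : ℕ} {A : Matrix (Fin n) (Fin n) ℝ} (hm : m = n - j) :
    Mminor n j (n-1) A = (-1 : ℝ) ^ (j * (n-1)) *
    (A.submatrix (fun p : Fin m => (⟨(p : ℕ) + j, by have := p.isLt; omega⟩ : Fin n))
      (fun q : Fin m => (⟨(q : ℕ), by have := q.isLt; omega⟩ : Fin n))).det := by
  rw [Mminor_eq hm]
  congr 3
  funext p
  rw [if_neg (by omega)]


lemma K3 {n : ℕ} (A : Matrix (Fin (n+2)) (Fin (n+2)) ℝ) (hA : Aᵀ = -A) (A' : Matrix (Fin n) (Fin n) ℝ) (U : Matrix (Fin n) (Fin n) ℝ) (hU : UT U) (hX : AL (U * A'))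
    (ha : A 0 1 ≠ 0) (hS : Schur (A - exZ A')) {j : ℕ} (hj : 1 ≤ j) (hjn : j ≤ n) :
    Mminor (n+2) j (n+1) A = ((exI U *ᵥ A 0) ⟨j, by omega⟩ * (exI U *ᵥ A 1) ⟨j+1, by omega⟩
      - (exI U *ᵥ A 1) ⟨j, by omega⟩ * (exI U *ᵥ A 0) ⟨j+1, by omega⟩) * Mminor n j (n-1) A' := by
  obtain ⟨m, hm⟩ : ∃ m, m = n - j := ⟨_, rfl⟩
  have := Mminor_corner (n := n+2) (m := m+2) (j := j) (A := A) (by omega)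
  rw [show n + 2 - 1 = n + 1 from rfl] at this
  rw [this, ← corner_UT (U := exI U) hU.exI (by omega), Mminor_corner hm, ← corner_UT hU hm]
  rw [K_gen (m := m) (exI U * A) (U * A') _ _ (schur_col_U A hA A' U ha hS) _ _ ?_
    (fun p : Fin m => (⟨(p : ℕ) + j, by have := p.isLt; omega⟩ : Fin n))
    (fun q : Fin m => ⟨(q : ℕ), by have := q.isLt; omega⟩) ?_ (fun _ => rfl) ?_ ?_]
  · simp only [UA_c0 A hA, UA_c1 A hA]
    have hs : (-1 : ℝ) ^ (j * (n+1)) = (-1 : ℝ) ^ (j * (n-1)) := by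
      obtain ⟨n, rfl⟩ : ∃ l, n = l + 1 := ⟨n - 1, by omega⟩
      rw [show j * (n + 1 + 1) = j * (n+1-1) + 2 * j by simp; ring, pow_add, pow_mul (-1 : ℝ) 2]
      simp
    rw [hs]
    simp only [Fin.val_zero, Fin.val_one, zero_add, add_comm 1 j]
    ring
  · intro q; rfl
  · intro p
    ext
    simp; omega
  · intro q
    apply AL_exZ hX
    simp; omega
  · intro q
    apply AL_exZ hX
    simp; omega

lemma K2 {n : ℕ} (A : Matrix (Fin (n+2)) (Fin (n+2)) ℝ) (hA : Aᵀ = -A) (A' : Matrix (Fin n) (Fin n) ℝ) (U : Matrix (Fin n) (Fin n) ℝ) (hU : UT U) (hX : AL (U * A'))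
    (ha : A 0 1 ≠ 0) (hS : Schur (A - exZ A')) {j : ℕ} (hj : 1 ≤ j) (hjn : j ≤ n) :
    Mminor (n+2) j n A = A 0 1 * ((-1 : ℝ)^j * (exI U *ᵥ A 0) ⟨j+1, by omega⟩)
      * Mminor n j (n-1) A' := by
  obtain ⟨m, hm⟩ : ∃ m, m = n - j := ⟨_, rfl⟩
  rw [Mminor_eq (m := m + 2) (by omega), Mminor_corner hm, ← corner_UT hU hm]
  rw [← det_UT_minor hU.exI]
  rw [K_gen (m := m) (exI U * A) (U * A') _ _ (schur_col_U A hA A' U ha hS) _ _ ?_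
    (fun p : Fin m => (⟨(p : ℕ) + j, by have := p.isLt; omega⟩ : Fin n))
    (fun q : Fin m => ⟨(q : ℕ), by have := q.isLt; omega⟩) ?_ (fun _ => rfl) ?_ ?_]
  · simp only [UA_c0 A hA, UA_c1 A hA]
    have hs : (-1 : ℝ) ^ (j * n) = (-1 : ℝ) ^ (j * (n-1)) * (-1)^j := by
      obtain ⟨n, rfl⟩ : ∃ l, n = l + 1 := ⟨n - 1, by omega⟩
      rw [← pow_add]
      congr 1
    rw [hs]
    have e0 : 0 < n + 2 - n - 1 := by omega
    have e1 : ¬ 1 < n + 2 - n - 1 := by omega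
    simp only [Fin.val_zero, Fin.val_one, e0, e1, if_true, if_false, add_comm 1 j]
    have z0 : (exI U *ᵥ A 0) 0 = 0 := by
      have : A 0 0 = 0 := by have := skew_apply hA 0 0; linarith
      simp [Matrix.mulVec, dotProduct, exI_r0, this]
    have z1 : (exI U *ᵥ A 1) 0 = - A 0 1 := by
      rw [← skew_apply hA]
      simp [Matrix.mulVec, dotProduct, exI_r0]
    simp only [show (⟨0, by omega⟩ : Fin (n+2)) = 0 from rfl, z0, z1]
    ring
  · intro q; rfl
  · intro p
    ext
    rw [if_neg (by simp)]
    simp; omega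
  · intro q
    have e0 : 0 < n + 2 - n - 1 := by omega
    simp only [Fin.val_zero, e0, if_true]
    exact exZ_r0 _ _
  · intro q
    have e1 : ¬ 1 < n + 2 - n - 1 := by omega
    simp only [Fin.val_one, e1, if_false]
    apply AL_exZ hX
    simp; omega
  · intro p q h
    rw [Fin.lt_def] at h ⊢
    simp only
    split_ifs <;> simp only <;> omega
  · intro p q hq
    by_cases h : (p : ℕ) < n + 2 - n - 1
    · rw [if_pos h]
      have : (⟨(p : ℕ), by omega⟩ : Fin (n+2)) = 0 := by ext; simp only [Fin.val_zero]; omega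
      rw [this, exI_r0, if_neg]
      rintro rfl
      exact hq ⟨p, by simp only; rw [if_pos h]; exact this⟩
    · rw [if_neg h]
      apply hU.exI.1
      by_contra hlt
      apply hq
      have h1 := q.isLt
      rw [Fin.lt_def, not_lt] at hlt
      simp only at hlt
      refine ⟨⟨(q : ℕ) - j, by omega⟩, ?_⟩
      simp only
      rw [if_neg (by omega)]
      ext; simp only; omega

lemma K4 {n : ℕ} (A : Matrix (Fin (n+2)) (Fin (n+2)) ℝ) (hA : Aᵀ = -A) (U : Matrix (Fin n) (Fin n) ℝ) (hU : UT U)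
    : Mminor (n+2) (n+1) (n+1) A = (-1 : ℝ)^n * (exI U *ᵥ A 0) ⟨n+1, by omega⟩ := by
  have h := Mminor_corner (n := n+2) (m := 1) (j := n+1) (A := A) (by omega)
  rw [show n + 2 - 1 = n + 1 from rfl] at h
  rw [h, ← corner_UT (U := exI U) hU.exI (by omega)]
  simp only [Matrix.det_unique, Matrix.submatrix_apply]
  have := UA_c0 A hA U ⟨n+1, by omega⟩
  simp only [show ((default : Fin 1) : ℕ) = 0 from rfl, zero_add]
  rw [show (⟨0, by omega⟩ : Fin (n+2)) = 0 from rfl, this]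
  have hs : (-1 : ℝ) ^ ((n+1) * (n+1)) = - (-1 : ℝ)^n := by
    rw [pow_mul]
    rcases Nat.even_or_odd n with h | h
    · rw [(h.add_one).neg_one_pow, h.neg_one_pow, (h.add_one).neg_one_pow]
    · rw [(h.add_one).neg_one_pow, h.neg_one_pow]; simp
  rw [hs]; ring

/-! ### blocks -/

def bid (n : ℕ) (f : ℕ → ℝ) : Matrix (Fin n) (Fin n) ℝ :=
  fun p q => if (p : ℕ) = q then 1 else if (p : ℕ) + 1 = q then f p else 0

lemma bid_mulVec {n : ℕ} (f : ℕ → ℝ) (x : Fin n → ℝ) (p : Fin n) :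
    (bid n f *ᵥ x) p = x p + if h : (p : ℕ) + 1 < n then f p * x ⟨p + 1, h⟩ else 0 := by
  simp only [Matrix.mulVec, dotProduct]
  rw [Finset.sum_eq_add_sum_sdiff_singleton_of_mem (Finset.mem_univ p)]
  congr 1
  · simp [bid]
  · split_ifs with h
    · rw [Finset.sum_eq_single ⟨p + 1, h⟩]
      · simp [bid]
      · intro q hq hne
        have h1 : (p : ℕ) ≠ q := by
          intro h; simp [Fin.ext_iff] at hq; omega
        have h2 : (p : ℕ) + 1 ≠ q := by
          intro h; apply hne; ext; simp [h]
        simp [bid, h1, h2]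
      · intro hh; simp [Fin.ext_iff] at hh
    · apply Finset.sum_eq_zero
      intro q hq
      have h1 : (p : ℕ) ≠ q := by
        intro h; simp [Fin.ext_iff] at hq; omega
      have h2 : (p : ℕ) + 1 ≠ q := by omega
      simp [bid, h1, h2]

lemma UT_bid {n : ℕ} (f : ℕ → ℝ) : UT (bid n f) := by
  constructor
  · intro p q h
    rw [Fin.lt_def] at h
    simp only [bid]
    rw [if_neg (by omega), if_neg (by omega)]
  · intro p; simp [bid]

def Jm (n : ℕ) : Matrix (Fin (n+2)) (Fin (n+2)) ℝ :=
  fun p q => if (p : ℕ) = n ∧ (q : ℕ) = n + 1 then 1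
    else if (p : ℕ) = n + 1 ∧ (q : ℕ) = n then -1 else 0

/-- positive block parameters -/
structure Par (n : ℕ) (τ : ℝ) (s r : ℕ → ℝ) : Prop where
  τpos : 0 < τ
  spos : ∀ i, i < n → 0 < s i
  rpos : ∀ i, 1 ≤ i → i ≤ n → 0 < r i
  s0 : s n = 0
  r0 : r 0 = 0

/-- sign conditions -/
structure Sgn (n : ℕ) (b c : ℕ → ℝ) : Prop where
  b0 : b 0 = 0
  c0 : c 0 = - b 1
  c1 : c 1 = 0
  bs : ∀ i, 1 ≤ i → i ≤ n + 1 → 0 < (-1 : ℝ)^(i+1) * b i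
  D : ∀ i, 1 ≤ i → i ≤ n → 0 < b i * c (i+1) - c i * b (i+1)

def wed (n : ℕ) (b c : ℕ → ℝ) : Matrix (Fin (n+2)) (Fin (n+2)) ℝ :=
  fun p q => (b p * c q - c p * b q) / b 1

lemma congr_vec {n : ℕ} (U : Matrix (Fin n) (Fin n) ℝ) (x y : Fin n → ℝ) :
    U * Matrix.vecMulVec x y * Uᵀ = Matrix.vecMulVec (U *ᵥ x) (U *ᵥ y) := by
  rw [Matrix.mul_vecMulVec, Matrix.vecMulVec_mul, Matrix.vecMul_transpose]

lemma wed_eq (n : ℕ) (b c : ℕ → ℝ) : wed n b c = (b 1)⁻¹ •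
    (Matrix.vecMulVec (fun p : Fin (n+2) => b p) (fun p : Fin (n+2) => c p) -
      Matrix.vecMulVec (fun p : Fin (n+2) => c p) (fun p : Fin (n+2) => b p)) := by
  ext p q
  simp [wed, Matrix.vecMulVec_apply]
  ring

lemma Jm_eq (n : ℕ) : Jm n = Matrix.vecMulVec (fun p : Fin (n+2) => if (p : ℕ) = n then (1:ℝ) else 0)
      (fun p : Fin (n+2) => if (p : ℕ) = n + 1 then (1:ℝ) else 0) -
    Matrix.vecMulVec (fun p : Fin (n+2) => if (p : ℕ) = n + 1 then (1:ℝ) else 0)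
      (fun p : Fin (n+2) => if (p : ℕ) = n then (1:ℝ) else 0) := by
  ext p q
  simp only [Jm, Matrix.vecMulVec_apply, Matrix.sub_apply]
  by_cases h1 : (p : ℕ) = n <;> by_cases h2 : (q : ℕ) = n <;>
    by_cases h3 : (p : ℕ) = n + 1 <;> by_cases h4 : (q : ℕ) = n + 1 <;> simp [h1, h2, h3, h4]

lemma Sgn.ne {n : ℕ} {b c : ℕ → ℝ} (h : Sgn n b c) {i : ℕ} (h1 : 1 ≤ i) (h2 : i ≤ n + 1) :
    b i ≠ 0 := by
  intro h0
  have := h.bs i h1 h2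
  simp [h0] at this

lemma Sgn.bpos {n : ℕ} {b c : ℕ → ℝ} (h : Sgn n b c) : 0 < b 1 := by
  simpa using h.bs 1 le_rfl (by omega)

lemma Sgn.ratio {n : ℕ} {b c : ℕ → ℝ} (h : Sgn n b c) {i : ℕ} (h1 : 1 ≤ i) (h2 : i ≤ n) :
    0 < - b i / b (i+1) ∧ 0 < - b (i+1) / b i := by
  have e1 := h.bs i h1 (by omega)
  have e2 := h.bs (i+1) (by omega) (by omega)
  have h3 : (-1 : ℝ)^(i+1+1) = - (-1)^(i+1) := by rw [pow_succ]; ring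
  rw [h3] at e2
  rcases neg_one_pow_eq_or ℝ (i+1) with h | h <;> rw [h] at e1 e2
  · constructor
    · apply div_pos_of_neg_of_neg <;> linarith
    · apply div_pos <;> linarith
  · constructor
    · apply div_pos <;> linarith
    · apply div_pos_of_neg_of_neg <;> linarith

lemma block_back {n : ℕ} {b c : ℕ → ℝ} (h : Sgn n b c) :
    ∃ τ s r, Par n τ s r ∧ (bid (n+2) s * bid (n+2) r) * wed n b c *
      (bid (n+2) s * bid (n+2) r)ᵀ = τ • Jm n := by
  have hb1 := h.bpos
  let D : ℕ → ℝ := fun i => b i * c (i+1) - c i * b (i+1)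
  have hD : ∀ i, i ≤ n → 0 < D i := by
    intro i hi
    rcases Nat.eq_zero_or_pos i with rfl | hi'
    · simp only [D, h.b0, h.c0, h.c1, zero_add]; nlinarith
    · exact h.D i hi' hi
  let r : ℕ → ℝ := fun i => if i = 0 then 0 else - b i / b (i+1)
  let s : ℕ → ℝ := fun i => if i = n then 0 else D i / D (i+1) * (- b (i+2) / b (i+1))
  have hr : ∀ i, 1 ≤ i → i ≤ n → r i * b (i+1) = - b i := by
    intro i h1 h2
    have := h.ne (i := i+1) (by omega) (by omega)
    simp only [r]; rw [if_neg (by omega)]; field_simp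
  have hr0 : r 0 = 0 := by simp [r]
  have hsn : s n = 0 := by simp [s]
  refine ⟨D n / b 1, s, r, ⟨?_, ?_, ?_, hsn, hr0⟩, ?_⟩
  · exact div_pos (hD n le_rfl) hb1
  · intro i hi
    simp only [s]; rw [if_neg (by omega)]
    exact mul_pos (div_pos (hD _ (by omega)) (hD _ (by omega)))
      (h.ratio (i := i+1) (by omega) (by omega)).2
  · intro i h1 h2
    simp only [r]; rw [if_neg (by omega)]
    exact (h.ratio h1 h2).1
  · have w1 : bid (n+2) r *ᵥ (fun p : Fin (n+2) => b p) =
        fun p : Fin (n+2) => if (p : ℕ) = n + 1 then b (n+1) else 0 := by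
      funext p
      rw [bid_mulVec]
      have hp := p.isLt
      split_ifs with h1 h2 h2
      · omega
      · by_cases h0 : (p : ℕ) = 0
        · simp [h0, hr0, h.b0]
        · simp only; rw [hr p (by omega) (by omega)]; ring
      · simp [h2]
      · omega
    have w1' : bid (n+2) s *ᵥ (fun p : Fin (n+2) => if (p : ℕ) = n + 1 then b (n+1) else 0) =
        fun p : Fin (n+2) => if (p : ℕ) = n + 1 then b (n+1) else 0 := by
      funext p
      rw [bid_mulVec]
      have hp := p.isLt
      by_cases h1 : (p : ℕ) + 1 < n + 2
      · rw [dif_pos h1]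
        by_cases h2 : (p : ℕ) = n
        · simp [h2, hsn]
        · simp [h2]
      · simp [h1]
    have w2 : bid (n+2) r *ᵥ (fun p : Fin (n+2) => c p) =
        fun p : Fin (n+2) => if (p : ℕ) = n + 1 then c (n+1) else - D p / b (p + 1) := by
      funext p
      rw [bid_mulVec]
      have hp := p.isLt
      by_cases h1 : (p : ℕ) + 1 < n + 2
      · rw [dif_pos h1, if_neg (by omega)]
        by_cases h0 : (p : ℕ) = 0
        · simp only [h0, hr0, D, h.b0, h.c0, h.c1, zero_add]; field_simp; ring
        · have := h.ne (i := p+1) (by omega) (by omega)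
          have e := hr p (by omega) (by omega)
          field_simp
          simp only [D]
          linear_combination c (p+1) * e
      · rw [dif_neg h1, if_pos (by omega)]
        simp only [show (p : ℕ) = n+1 by omega]; ring
    have w2' : bid (n+2) s *ᵥ (fun p : Fin (n+2) =>
          if (p : ℕ) = n + 1 then c (n+1) else - D p / b (p + 1)) =
        fun p : Fin (n+2) => if (p : ℕ) = n + 1 then c (n+1) else if (p : ℕ) = n then - D n / b (n+1) else 0 := by
      funext p
      rw [bid_mulVec]
      have hp := p.isLt
      by_cases h1 : (p : ℕ) + 1 < n + 2
      · rw [dif_pos h1]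
        simp only
        have h3 : ¬ (p : ℕ) = n + 1 := by omega
        rw [if_neg h3, if_neg h3]
        by_cases h2 : (p : ℕ) = n
        · simp [h2, hsn]
        · rw [if_neg h2, if_neg (by omega)]
          have e1 := h.ne (i := p+1) (by omega) (by omega)
          have e2 := h.ne (i := p+2) (by omega) (by omega)
          have e3 := (hD (p+1) (by omega)).ne'
          simp only [s]; rw [if_neg h2]
          rw [show (p : ℕ) + 1 + 1 = p + 2 from rfl]
          field_simp; ring
      · rw [dif_neg h1, if_pos (by omega), if_pos (by omega)]; ring
    rw [wed_eq, Matrix.mul_smul, Matrix.smul_mul, Matrix.mul_sub, Matrix.sub_mul, congr_vec,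
      congr_vec, ← Matrix.mulVec_mulVec, ← Matrix.mulVec_mulVec, w1, w1', w2, w2']
    have e1 := h.ne (i := n+1) (by omega) (by omega)
    ext p q
    simp only [Matrix.smul_apply, Matrix.sub_apply, Matrix.vecMulVec_apply, smul_eq_mul, Jm]
    by_cases h1 : (p : ℕ) = n <;> by_cases h2 : (q : ℕ) = n <;>
      by_cases h3 : (p : ℕ) = n + 1 <;> by_cases h4 : (q : ℕ) = n + 1 <;>
      first
      | omega
      | (simp [h1, h2, h3, h4]; done)
      | (simp [h1, h2, h3, h4]; right; ring; done)
      | (simp [h1, h2, h3, h4] <;> field_simp <;> try ring)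

lemma block_fwd {n : ℕ} {τ : ℝ} {s r : ℕ → ℝ} (h : Par n τ s r)
    (B : Matrix (Fin (n+2)) (Fin (n+2)) ℝ)
    (hB : (bid (n+2) s * bid (n+2) r) * B * (bid (n+2) s * bid (n+2) r)ᵀ = τ • Jm n) :
    ∃ b c, Sgn n b c ∧ B = wed n b c := by
  set U := bid (n+2) s * bid (n+2) r with hUd
  have hdet : IsUnit U.det := by
    rw [((UT_bid s).mul (UT_bid r)).det]; exact isUnit_one
  have hUV := Matrix.mul_nonsing_inv U hdet
  have hVU := Matrix.nonsing_inv_mul U hdet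
  let en : Fin (n+2) → ℝ := fun p => if (p : ℕ) = n then (1:ℝ) else 0
  let el : Fin (n+2) → ℝ := fun p => if (p : ℕ) = n + 1 then (1:ℝ) else 0
  have hBe : B = U⁻¹ * (τ • Jm n) * (U⁻¹)ᵀ := by
    rw [← hB]
    have : Uᵀ * (U⁻¹)ᵀ = 1 := by rw [← Matrix.transpose_mul, hVU, Matrix.transpose_one]
    rw [Matrix.mul_assoc U B, ← Matrix.mul_assoc U⁻¹, hVU, Matrix.one_mul, Matrix.mul_assoc, this,
      Matrix.mul_one]
  let u' : Fin (n+2) → ℝ := U⁻¹ *ᵥ en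
  let v' : Fin (n+2) → ℝ := U⁻¹ *ᵥ el
  have hu' : bid (n+2) s *ᵥ (bid (n+2) r *ᵥ u') = en := by
    rw [Matrix.mulVec_mulVec, ← hUd, Matrix.mulVec_mulVec, hUV, Matrix.one_mulVec]
  have hv' : bid (n+2) s *ᵥ (bid (n+2) r *ᵥ v') = el := by
    rw [Matrix.mulVec_mulVec, ← hUd, Matrix.mulVec_mulVec, hUV, Matrix.one_mulVec]
  -- natural number indexed versions
  let N : (Fin (n+2) → ℝ) → ℕ → ℝ := fun x i => if h : i < n + 2 then x ⟨i, h⟩ else 0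
  have hN : ∀ x (p : Fin (n+2)), x p = N x p := by
    intro x p; simp [N]
  have hbid : ∀ (f : ℕ → ℝ) x i, i < n + 2 → N (bid (n+2) f *ᵥ x) i = N x i + f i * N x (i+1) := by
    intro f x i hi
    simp only [N]
    rw [dif_pos hi, dif_pos hi, bid_mulVec]
    by_cases h1 : i + 1 < n + 2
    · simp [h1]
    · simp [h1]
  have hN2 : ∀ x, N x (n+2) = 0 := by intro x; simp [N]
  set u := N u'
  set v := N v'
  set y := N (bid (n+2) r *ᵥ u') with hy
  set z := N (bid (n+2) r *ᵥ v') with hz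
  have yu : ∀ i, i < n+2 → y i = u i + r i * u (i+1) := fun i hi => hbid _ _ _ hi
  have zv : ∀ i, i < n+2 → z i = v i + r i * v (i+1) := fun i hi => hbid _ _ _ hi
  have ey : ∀ i, i < n+2 → y i + s i * y (i+1) = if i = n then 1 else 0 := by
    intro i hi
    rw [← hbid s _ i hi, hu']
    simp [N, hi, en]
  have ez : ∀ i, i < n+2 → z i + s i * z (i+1) = if i = n + 1 then 1 else 0 := by
    intro i hi
    rw [← hbid s _ i hi, hv']
    simp [N, hi, el]
  have y2 : y (n+2) = 0 := hN2 _
  have z2 : z (n+2) = 0 := hN2 _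
  have u2 : u (n+2) = 0 := hN2 _
  have v2 : v (n+2) = 0 := hN2 _
  have yl : y (n+1) = 0 := by
    have := ey (n+1) (by omega); simpa [y2] using this
  have zl : z (n+1) = 1 := by
    have := ez (n+1) (by omega); simpa [z2] using this
  have yn : y n = 1 := by
    have := ey n (by omega); simpa [yl] using this
  have zn : ∀ i, i ≤ n → z (n - i) = 0 := by
    intro i
    induction i with
    | zero => intro _; have := ez n (by omega); simpa [h.s0] using this
    | succ i ih =>
      intro hi
      have := ez (n - (i+1)) (by omega)
      rw [show n - (i+1) + 1 = n - i by omega, ih (by omega), if_neg (by omega)] at this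
      linarith
  have zn' : ∀ i, i ≤ n → z i = 0 := by
    intro i hi
    have := zn (n - i) (by omega)
    rwa [show n - (n - i) = i by omega] at this
  have vl : v (n+1) = 1 := by
    have := zv (n+1) (by omega); rw [v2, zl] at this; linarith
  have ul : u (n+1) = 0 := by
    have := yu (n+1) (by omega); rw [u2, yl] at this; linarith
  have vrec : ∀ i, i ≤ n → v i = - r i * v (i+1) := by
    intro i hi
    have := zv i (by omega); rw [zn' i hi] at this; linarith
  have v0 : v 0 = 0 := by rw [vrec 0 (by omega), h.r0]; ring
  have u0 : u 0 = y 0 := by rw [yu 0 (by omega), h.r0]; ring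
  have ysg : ∀ i, i ≤ n → 0 < (-1 : ℝ)^i * y (n - i) := by
    intro i
    induction i with
    | zero => intro _; simp [yn]
    | succ i ih =>
      intro hi
      have := ey (n - (i+1)) (by omega)
      rw [show n - (i+1) + 1 = n - i by omega, if_neg (by omega)] at this
      have h1 := ih (by omega)
      have h2 := h.spos (n - (i+1)) (by omega)
      have : (-1 : ℝ)^(i+1) * y (n - (i+1)) = s (n - (i+1)) * ((-1)^i * y (n - i)) := by
        rw [pow_succ]; linear_combination (-(-1:ℝ)^i) * this
      rw [this]; positivity
  have vsg : ∀ i, i ≤ n → 0 < (-1 : ℝ)^i * v (n + 1 - i) := by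
    intro i
    induction i with
    | zero => intro _; simp [vl]
    | succ i ih =>
      intro hi
      have := vrec (n + 1 - (i+1)) (by omega)
      rw [show n + 1 - (i+1) + 1 = n + 1 - i by omega] at this
      have h1 := ih (by omega)
      have h2 := h.rpos (n + 1 - (i+1)) (by omega) (by omega)
      have : (-1 : ℝ)^(i+1) * v (n + 1 - (i+1)) = r (n + 1 - (i+1)) * ((-1)^i * v (n + 1 - i)) := by
        rw [pow_succ]; linear_combination (-(-1:ℝ)^i) * this
      rw [this]; positivity
  have hτ := h.τpos
  have y0 : 0 < (-1 : ℝ)^n * y 0 := by simpa using ysg n le_rfl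
  have v1 : 0 < (-1 : ℝ)^n * v 1 := by simpa using vsg n le_rfl
  have sq : ∀ k : ℕ, (-1 : ℝ)^k * (-1)^k = 1 := by
    intro k; rw [← mul_pow]; simp
  have vy : 0 < v 1 * y 0 := by
    have := mul_pos y0 v1
    have e := sq n
    calc 0 < _ := this
      _ = ((-1 : ℝ)^n * (-1)^n) * (v 1 * y 0) := by ring
      _ = _ := by rw [e]; ring
  have hn1 : v 1 ≠ 0 := by intro h; simp [h] at vy
  have hn0 : y 0 ≠ 0 := by intro h; simp [h] at vy
  refine ⟨fun i => τ * (u 0 * v i - v 0 * u i), fun i => τ * (u 1 * v i - v 1 * u i),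
    ⟨?_, ?_, ?_, ?_, ?_⟩, ?_⟩
  · simp [v0]
  · simp only [v0]; ring
  · ring
  · intro i h1 h2
    have := vsg (n+1-i) (by omega)
    rw [show n + 1 - (n + 1 - i) = i by omega] at this
    have e : (-1 : ℝ)^(i+1) = (-1)^n * (-1)^(n+1-i) := by
      obtain ⟨i', rfl⟩ : ∃ l, i = l + 1 := ⟨i - 1, by omega⟩
      obtain ⟨l, hl⟩ : ∃ l, n = i' + l := ⟨n - i', by omega⟩
      have e := sq l
      rw [show n + 1 - (i' + 1) = l by omega]
      conv_rhs => rw [hl, pow_add, mul_assoc, e]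
      rw [pow_succ, pow_succ]; ring
    calc 0 < τ * (((-1 : ℝ)^n * y 0) * ((-1)^(n+1-i) * v i)) := by positivity
      _ = _ := by rw [e, u0, v0]; ring
  · intro i h1 h2
    have a1 := vsg (n-i) (by omega)
    rw [show n + 1 - (n - i) = i + 1 by omega] at a1
    have a2 := ysg (n-i) (by omega)
    rw [show n - (n - i) = i by omega] at a2
    have e := sq (n - i)
    have e1 : v i = - r i * v (i+1) := vrec i h2
    have e2 : y i = u i + r i * u (i+1) := yu i (by omega)
    calc 0 < τ^2 * (v 1 * y 0) * (((-1 : ℝ)^(n-i) * v (i+1)) * ((-1)^(n-i) * y i)) := by positivity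
      _ = ((-1 : ℝ)^(n-i) * (-1)^(n-i)) * (τ^2 * (v 1 * y 0) * (v (i+1) * y i)) := by ring
      _ = _ := by rw [e, u0, v0, e1, e2]; ring
  · have : B = τ • (Matrix.vecMulVec u' v' - Matrix.vecMulVec v' u') := by
      rw [hBe, Jm_eq, Matrix.mul_smul, Matrix.smul_mul, Matrix.mul_sub, Matrix.sub_mul, congr_vec,
        congr_vec]
    rw [this]
    ext p q
    simp only [Matrix.smul_apply, Matrix.sub_apply, Matrix.vecMulVec_apply, smul_eq_mul, wed, v0, u0]
    rw [hN u' p, hN u' q, hN v' p, hN v' q]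
    have ht := hτ.ne'
    field_simp
    ring

/-! ### the recursive description -/

inductive RR : (n : ℕ) → Matrix (Fin n) (Fin n) ℝ → Matrix (Fin n) (Fin n) ℝ → Prop
  | zero : RR 0 1 0
  | one : RR 1 1 0
  | step {n : ℕ} {U' A' : Matrix (Fin n) (Fin n) ℝ} {τ : ℝ} {s r : ℕ → ℝ}
      {A : Matrix (Fin (n+2)) (Fin (n+2)) ℝ} (hR : RR n U' A') (hp : Par n τ s r)
      (h : (bid (n+2) s * bid (n+2) r * exI U') * (A - exZ A') *
        (bid (n+2) s * bid (n+2) r * exI U')ᵀ = τ • Jm n) :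
      RR (n+2) (bid (n+2) s * bid (n+2) r * exI U') A

lemma RR.ut {n : ℕ} {U A : Matrix (Fin n) (Fin n) ℝ} (h : RR n U A) : UT U := by
  induction h with
  | zero => exact ⟨fun p => p.elim0, fun p => p.elim0⟩
  | one => exact ⟨fun p q h => by omega, fun p => by simp⟩
  | step hR hp h ih => exact ((UT_bid _).mul (UT_bid _)).mul ih.exI

lemma bid_mul_apply {n : ℕ} (f : ℕ → ℝ) (M : Matrix (Fin n) (Fin n) ℝ) (p q : Fin n) :
    (bid n f * M) p q = M p q + if h : (p : ℕ) + 1 < n then f p * M ⟨p + 1, h⟩ q else 0 :=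
  bid_mulVec f (fun k => M k q) p

lemma RR.al {n : ℕ} {U A : Matrix (Fin n) (Fin n) ℝ} (h : RR n U A) : AL (U * A) := by
  induction h with
  | zero => intro p; exact p.elim0
  | one => intro p q h; omega
  | @step n U' A' τ s r A hR hp h ih =>
    set W := bid (n+2) s * bid (n+2) r * exI U' with hW
    have hUT : UT W := ((UT_bid _).mul (UT_bid _)).mul hR.ut.exI
    have hdet : IsUnit W.det := by rw [hUT.det]; exact isUnit_one
    have hUV := Matrix.mul_nonsing_inv W hdet
    have hVU := Matrix.nonsing_inv_mul W hdet
    have e : W * A = bid (n+2) s * (bid (n+2) r * exZ (U' * A')) + τ • (Jm n * (W⁻¹)ᵀ) := by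
      have t : Wᵀ * (W⁻¹)ᵀ = 1 := by rw [← Matrix.transpose_mul, hVU, Matrix.transpose_one]
      have h2 : W * (A - exZ A') = τ • (Jm n * (W⁻¹)ᵀ) := by
        rw [← Matrix.smul_mul, ← h, Matrix.mul_assoc (W * (A - exZ A')) Wᵀ, t, Matrix.mul_one]
      rw [← h2, Matrix.mul_sub, ← exI_mul_exZ, hW]
      simp only [Matrix.mul_assoc]
      abel
    intro p q hpq
    rw [e]
    have z : ∀ p' : Fin (n+2), (p' : ℕ) ≤ p + 2 → exZ (U' * A') p' q = 0 := by
      intro p' hp'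
      exact AL_exZ ih _ _ (by omega)
    have hJ : (Jm n * (W⁻¹)ᵀ) p q = 0 := by
      by_cases hp1 : (p : ℕ) = n
      · have hq : q = 0 := by ext; simp only [Fin.val_zero]; omega
        subst hq
        rw [Matrix.mul_apply, Finset.sum_eq_single ⟨n+1, by omega⟩]
        · have : W⁻¹ 0 ⟨n+1, by omega⟩ = 0 := by
            set x : Fin (n+2) → ℝ := fun k => W⁻¹ k ⟨n+1, by omega⟩ with hx
            have hWx : bid (n+2) s *ᵥ (bid (n+2) r *ᵥ (exI U' *ᵥ x)) =
                fun k => if k = ⟨n+1, by omega⟩ then 1 else 0 := by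
              rw [Matrix.mulVec_mulVec, Matrix.mulVec_mulVec, ← hW]
              funext k
              have := congrFun (congrFun hUV k) ⟨n+1, by omega⟩
              rw [Matrix.one_apply] at this
              rw [← this]; rfl
            set z := bid (n+2) r *ᵥ (exI U' *ᵥ x) with hz
            have hzz : ∀ i, i ≤ n → ∀ (hi : n - i < n+2), z ⟨n - i, hi⟩ = 0 := by
              intro i
              induction i with
              | zero =>
                intro _ hi
                have := congrFun hWx ⟨n, by omega⟩
                rw [bid_mulVec] at this
                simpa [hp.s0] using this
              | succ i ih =>
                intro hi hi'
                have := congrFun hWx ⟨n - (i+1), by omega⟩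
                rw [bid_mulVec, dif_pos (show n - (i+1) + 1 < n + 2 by omega),
                  if_neg (by simp only [Fin.ext_iff]; omega)] at this
                have e2 : (⟨((⟨n - (i+1), by omega⟩ : Fin (n+2)) : ℕ) + 1, show n - (i+1) + 1 < n + 2 by omega⟩ : Fin (n+2))
                    = ⟨n - i, by omega⟩ := by ext; simp only []; omega
                rw [e2, ih (by omega)] at this
                simpa using this
            have h0 : z 0 = 0 := by
              have := hzz n le_rfl (by omega)
              simpa using this
            rw [hz, bid_mulVec] at h0
            have h1 : (exI U' *ᵥ x) 0 = x 0 := by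
              simp [Matrix.mulVec, dotProduct, exI_r0]
            simpa [hp.r0, h1] using h0
          rw [Matrix.transpose_apply, this, mul_zero]
        · intro k _ hk
          have : Jm n p k = 0 := by
            simp only [Jm]
            rw [if_neg, if_neg]
            · omega
            · rintro ⟨_, h⟩; exact hk (by ext; simpa using h)
          rw [this, zero_mul]
        · simp
      · rw [Matrix.mul_apply]
        apply Finset.sum_eq_zero
        intro k _
        have : Jm n p k = 0 := by
          simp only [Jm]
          rw [if_neg (by omega), if_neg (by omega)]
        rw [this, zero_mul]
    rw [Matrix.add_apply, Matrix.smul_apply, hJ, bid_mul_apply, bid_mul_apply, z p (by omega)]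
    have h1 : (p : ℕ) + 1 < n + 2 := by omega
    rw [dif_pos h1, dif_pos h1, bid_mul_apply, z ⟨p+1, h1⟩ (by simp)]
    split_ifs with h2
    · rw [z ⟨_, h2⟩ (by simp)]; simp
    · simp

lemma UT.cancel {n : ℕ} {U : Matrix (Fin n) (Fin n) ℝ} (hU : UT U) (X Y : Matrix (Fin n) (Fin n) ℝ) :
    U * X * Uᵀ = U * Y * Uᵀ ↔ X = Y := by
  constructor
  · intro h
    have hdet : IsUnit U.det := by rw [hU.det]; exact isUnit_one
    have hVU := Matrix.nonsing_inv_mul U hdet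
    have t : Uᵀ * (U⁻¹)ᵀ = 1 := by rw [← Matrix.transpose_mul, hVU, Matrix.transpose_one]
    have : ∀ Z : Matrix (Fin n) (Fin n) ℝ, U⁻¹ * (U * Z * Uᵀ) * (U⁻¹)ᵀ = Z := by
      intro Z
      rw [Matrix.mul_assoc U, ← Matrix.mul_assoc U⁻¹, hVU, Matrix.one_mul, Matrix.mul_assoc, t,
        Matrix.mul_one]
    rw [← this X, h, this]
  · rintro rfl; rfl

lemma cong_r0 {n : ℕ} (U : Matrix (Fin n) (Fin n) ℝ) (M : Matrix (Fin (n+2)) (Fin (n+2)) ℝ) :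
    (exI U * M * (exI U)ᵀ) 0 = exI U *ᵥ M 0 := by
  have h0 : ∀ k, (exI U * M) 0 k = M 0 k := by
    intro k; simp [Matrix.mul_apply, exI_r0]
  funext q
  rw [Matrix.mul_apply]
  simp only [h0, Matrix.mulVec, dotProduct, Matrix.transpose_apply, mul_comm]

lemma cong_r1 {n : ℕ} (U : Matrix (Fin n) (Fin n) ℝ) (M : Matrix (Fin (n+2)) (Fin (n+2)) ℝ) :
    (exI U * M * (exI U)ᵀ) 1 = exI U *ᵥ M 1 := by
  have h0 : ∀ k, (exI U * M) 1 k = M 1 k := by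
    intro k; simp [Matrix.mul_apply, exI_r1]
  funext q
  rw [Matrix.mul_apply]
  simp only [h0, Matrix.mulVec, dotProduct, Matrix.transpose_apply, mul_comm]

lemma exI_v1 {n : ℕ} (U : Matrix (Fin n) (Fin n) ℝ) (x : Fin (n+2) → ℝ) :
    (exI U *ᵥ x) 1 = x 1 := by
  simp [Matrix.mulVec, dotProduct, exI_r1]

lemma exI_v0 {n : ℕ} (U : Matrix (Fin n) (Fin n) ℝ) (x : Fin (n+2) → ℝ) :
    (exI U *ᵥ x) 0 = x 0 := by
  simp [Matrix.mulVec, dotProduct, exI_r0]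

lemma schur_congr {n : ℕ} {U : Matrix (Fin n) (Fin n) ℝ} (hU : UT U)
    (M : Matrix (Fin (n+2)) (Fin (n+2)) ℝ) :
    Schur (exI U * M * (exI U)ᵀ) ↔ Schur M := by
  unfold Schur
  rw [cong_r0, cong_r1, exI_v1, ← congr_vec, ← congr_vec, ← Matrix.sub_mul, ← Matrix.mul_sub,
    ← Matrix.smul_mul, ← Matrix.mul_smul, hU.exI.cancel]

lemma sub_exZ_r0 {n : ℕ} (A : Matrix (Fin (n+2)) (Fin (n+2)) ℝ) (A' : Matrix (Fin n) (Fin n) ℝ) :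
    (A - exZ A') 0 = A 0 := by
  funext q; simp [exZ_r0]
lemma sub_exZ_r1 {n : ℕ} (A : Matrix (Fin (n+2)) (Fin (n+2)) ℝ) (A' : Matrix (Fin n) (Fin n) ℝ) :
    (A - exZ A') 1 = A 1 := by
  funext q; simp [exZ_r1]

lemma core {n : ℕ} {A : Matrix (Fin (n+2)) (Fin (n+2)) ℝ} (hA : Aᵀ = -A)
    {A' U : Matrix (Fin n) (Fin n) ℝ} (hU : UT U) (hX : AL (U * A')) (ha : A 0 1 ≠ 0)
    (hS : Schur (A - exZ A')) {b c : ℕ → ℝ}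
    (hb : ∀ p : Fin (n+2), (exI U *ᵥ A 0) p = b p)
    (hc : ∀ p : Fin (n+2), (exI U *ᵥ A 1) p = c p)
    (hM : ∀ j k : ℕ, 1 ≤ j → j ≤ k → k ≤ n - 1 → 0 < Mminor n j k A') :
    (∀ j k : ℕ, 1 ≤ j → j ≤ k → k ≤ n + 1 → 0 < Mminor (n+2) j k A) ↔ Sgn n b c := by
  have hMc : ∀ j, 1 ≤ j → j ≤ n → 0 < Mminor n j (n-1) A' := by
    intro j h1 h2
    rcases Nat.lt_or_ge j n with h | h
    · exact hM j (n-1) h1 (by omega) le_rfl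
    · have : j = n := by omega
      subst this
      rw [Mminor_corner (m := 0) (by omega), Matrix.det_isEmpty, (Nat.even_mul_pred_self j).neg_one_pow]
      norm_num
  have b1 : b 1 = A 0 1 := by
    have := hb 1
    rw [exI_v1] at this
    simpa using this.symm
  have k4 := K4 A hA U hU
  rw [hb] at k4
  have k2 : ∀ j, 1 ≤ j → j ≤ n → Mminor (n+2) j n A = A 0 1 * ((-1 : ℝ)^j * b (j+1))
      * Mminor n j (n-1) A' := by
    intro j h1 h2
    rw [K2 A hA A' U hU hX ha hS h1 h2, hb]
  have k3 : ∀ j, 1 ≤ j → j ≤ n → Mminor (n+2) j (n+1) A = (b j * c (j+1) - c j * b (j+1))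
      * Mminor n j (n-1) A' := by
    intro j h1 h2
    rw [K3 A hA A' U hU hX ha hS h1 h2, hb, hb, hc, hc]
  constructor
  · intro h
    have p4 : 0 < (-1 : ℝ)^n * b (n+1) := by
      have := h (n+1) (n+1) (by omega) le_rfl le_rfl
      rwa [k4] at this
    have hpos : 0 < b 1 := by
      rcases Nat.eq_zero_or_pos n with rfl | hn
      · simpa using p4
      · have := h n n hn le_rfl (by omega)
        rw [k2 n hn le_rfl, mul_assoc] at this
        rw [b1]
        exact (pos_iff_pos_of_mul_pos this).2 (mul_pos p4 (hMc n hn le_rfl))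
    refine ⟨?_, ?_, ?_, ?_, ?_⟩
    · have := hb 0
      rw [exI_v0] at this
      have h00 := skew_apply hA 0 0
      simp at this
      linarith
    · have := hc 0
      rw [exI_v0, skew_apply hA 1 0] at this
      simp at this
      linarith
    · have := hc 1
      rw [exI_v1] at this
      have h00 := skew_apply hA 1 1
      simp at this
      linarith
    · intro i h1 h2
      rcases Nat.lt_or_ge 1 i with hi | hi
      · obtain ⟨j, rfl⟩ : ∃ j, i = j + 1 := ⟨i - 1, by omega⟩
        have := h j n (by omega) (by omega) (by omega)
        rw [k2 j (by omega) (by omega)] at this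
        have e := pos_of_mul_pos_left this (hMc j (by omega) (by omega)).le
        rw [← b1] at e
        have e2 := pos_of_mul_pos_right e hpos.le
        rw [pow_succ, pow_succ]; linarith
      · have : i = 1 := by omega
        subst this
        simpa using hpos
    · intro i h1 h2
      have := h i (n+1) h1 (by omega) le_rfl
      rw [k3 i h1 h2] at this
      exact pos_of_mul_pos_left this (hMc i h1 h2).le
  · intro hs j k h1 h2 h3
    have hb1 := hs.bpos
    rw [b1] at hb1
    rcases Nat.lt_or_ge k n with hk | hk
    · rw [K1 A hA A' ha hS h2 hk]
      exact mul_pos (by positivity) (hM j k h1 h2 (by omega))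
    · rcases Nat.lt_or_ge n k with hk' | hk'
      · have : k = n + 1 := by omega
        subst this
        rcases Nat.lt_or_ge n j with hj | hj
        · have : j = n + 1 := by omega
          subst this
          rw [k4]
          have := hs.bs (n+1) (by omega) le_rfl
          rw [pow_succ, pow_succ] at this; linarith
        · rw [k3 j h1 hj]
          exact mul_pos (hs.D j h1 hj) (hMc j h1 hj)
      · have : k = n := by omega
        subst this
        rw [k2 j h1 h2]
        have := hs.bs (j+1) (by omega) (by omega)
        rw [pow_succ, pow_succ] at this
        exact mul_pos (mul_pos hb1 (by linarith)) (hMc j h1 h2)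

theorem main_RR (n : ℕ) : ∀ A : Matrix (Fin n) (Fin n) ℝ, Aᵀ = -A →
    ((∃ U, RR n U A) ↔ ∀ j k : ℕ, 1 ≤ j → j ≤ k → k ≤ n - 1 → 0 < Mminor n j k A) := by
  induction n using Nat.twoStepInduction with
  | zero =>
    intro A hA
    refine ⟨fun _ j k h1 h2 h3 => by omega, fun _ => ⟨1, ?_⟩⟩
    have : A = 0 := by ext p; exact p.elim0
    rw [this]; exact RR.zero
  | one =>
    intro A hA
    refine ⟨fun _ j k h1 h2 h3 => by omega, fun _ => ⟨1, ?_⟩⟩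
    have : A = 0 := by
      ext p q
      have e : q = p := Subsingleton.elim _ _
      subst e
      have := skew_apply hA q q
      simp; linarith
    rw [this]; exact RR.one
  | more n ih _ =>
    intro A hA
    constructor
    · rintro ⟨U, hR⟩
      cases hR with
      | @step _ U' A' τ s r _ hR hp h =>
        have hU := hR.ut
        obtain ⟨b, c, hs, hB⟩ := block_fwd hp (exI U' * (A - exZ A') * (exI U')ᵀ) (by
          rw [← h, Matrix.transpose_mul (bid (n+2) s * bid (n+2) r) (exI U')]
          simp only [Matrix.mul_assoc])
        have hb1 := hs.bpos
        have r0 := cong_r0 U' (A - exZ A')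
        have r1 := cong_r1 U' (A - exZ A')
        rw [sub_exZ_r0, hB] at r0
        rw [sub_exZ_r1, hB] at r1
        have hb : ∀ p : Fin (n+2), (exI U' *ᵥ A 0) p = b p := by
          intro p
          rw [← r0]
          simp only [wed, Fin.val_zero, hs.b0, hs.c0]
          field_simp; ring
        have hc : ∀ p : Fin (n+2), (exI U' *ᵥ A 1) p = c p := by
          intro p
          rw [← r1]
          simp only [wed, Fin.val_one, hs.c1]
          field_simp; ring
        have ha : A 0 1 = b 1 := by
          have := hb 1
          rw [exI_v1] at this
          simpa using this
        have ha' : A 0 1 ≠ 0 := by rw [ha]; exact hb1.ne'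
        have hS : Schur (A - exZ A') := by
          rw [← schur_congr hU]
          unfold Schur
          rw [cong_r0, cong_r1, exI_v1, sub_exZ_r0, sub_exZ_r1, hB, ha]
          ext p q
          simp only [Matrix.smul_apply, Matrix.sub_apply, Matrix.vecMulVec_apply, hb, hc, wed,
            smul_eq_mul]
          field_simp
        have hA' : A'ᵀ = -A' := by
          ext p q
          have e1 := schur_apply A A' ha' hS q.succ.succ p.succ.succ
          have e2 := schur_apply A A' ha' hS p.succ.succ q.succ.succ
          rw [exZ_ss] at e1 e2
          rw [skew_apply hA] at e1
          have : A' q p = - A' p q := by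
            linear_combination (-1 : ℝ) * e1 - e2
          simpa using this
        have := (core hA hU hR.al ha' hS hb hc ((ih A' hA').1 ⟨U', hR⟩)).2 hs
        simpa using this
    · intro hM
      have ha : A 0 1 ≠ 0 := by
        intro h0
        have h00 : A 0 0 = 0 := by have := skew_apply hA 0 0; linarith
        rcases Nat.eq_zero_or_pos n with rfl | hn
        · have := hM 1 1 le_rfl le_rfl (by omega)
          have k4 := K4 A hA 1 ⟨fun p => p.elim0, fun p => p.elim0⟩
          have e : (⟨0 + 1, by omega⟩ : Fin (0+2)) = 1 := rfl
          rw [e, exI_v1] at k4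
          simp only [zero_add] at k4 this
          rw [k4, h0] at this
          simp at this
        · have := hM n n hn le_rfl (by omega)
          rw [Mminor_eq (m := 2) (by omega), Matrix.det_fin_two] at this
          have e0 : 0 < n + 2 - n - 1 := by omega
          simp only [Matrix.submatrix_apply, Fin.val_zero, Fin.val_one, e0, if_true,
            show (⟨0, by omega⟩ : Fin (n+2)) = 0 from rfl,
            show (⟨1, by omega⟩ : Fin (n+2)) = 1 from rfl, h0, h00] at this
          simp at this
      let A' : Matrix (Fin n) (Fin n) ℝ := fun p q => A p.succ.succ q.succ.succ -
        (A 0 p.succ.succ * A 1 q.succ.succ - A 1 p.succ.succ * A 0 q.succ.succ) / A 0 1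
      have h00 : A 0 0 = 0 := by have := skew_apply hA 0 0; linarith
      have h11 : A 1 1 = 0 := by have := skew_apply hA 1 1; linarith
      have h10 : A 1 0 = - A 0 1 := skew_apply hA 1 0
      have hS : Schur (A - exZ A') := by
        unfold Schur
        rw [sub_exZ_r0, sub_exZ_r1]
        ext p q
        simp only [Matrix.smul_apply, Matrix.sub_apply, Matrix.vecMulVec_apply, smul_eq_mul]
        refine Fin.cases ?_ (fun p => Fin.cases ?_ (fun p => ?_) p) p
        · rw [exZ_r0, h00, h10]; ring
        · rw [Fin.succ_zero_eq_one, exZ_r1, h11]; ring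
        · refine Fin.cases ?_ (fun q => Fin.cases ?_ (fun q => ?_) q) q
          · rw [exZ_c0, h00, h10, skew_apply hA p.succ.succ 0]; ring
          · rw [Fin.succ_zero_eq_one, exZ_c1, h11, skew_apply hA p.succ.succ 1]; ring
          · rw [exZ_ss]
            simp only [A']
            field_simp
            ring
      have hA' : A'ᵀ = -A' := by
        ext p q
        show A q.succ.succ p.succ.succ -
          (A 0 q.succ.succ * A 1 p.succ.succ - A 1 q.succ.succ * A 0 p.succ.succ) / A 0 1 =
          -(A p.succ.succ q.succ.succ -
          (A 0 p.succ.succ * A 1 q.succ.succ - A 1 p.succ.succ * A 0 q.succ.succ) / A 0 1)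
        rw [skew_apply hA q.succ.succ p.succ.succ]
        ring
      have hM' : ∀ j k : ℕ, 1 ≤ j → j ≤ k → k ≤ n - 1 → 0 < Mminor n j k A' := by
        intro j k h1 h2 h3
        have := hM j k h1 h2 (by omega)
        rw [K1 A hA A' ha hS h2 (by omega)] at this
        exact pos_of_mul_pos_right this (sq_nonneg _)
      obtain ⟨U, hR⟩ := (ih A' hA').2 hM'
      have hU := hR.ut
      let b : ℕ → ℝ := fun i => if h : i < n + 2 then (exI U *ᵥ A 0) ⟨i, h⟩ else 0
      let c : ℕ → ℝ := fun i => if h : i < n + 2 then (exI U *ᵥ A 1) ⟨i, h⟩ else 0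
      have hb : ∀ p : Fin (n+2), (exI U *ᵥ A 0) p = b p := by intro p; simp [b]
      have hc : ∀ p : Fin (n+2), (exI U *ᵥ A 1) p = c p := by intro p; simp [c]
      have hs := (core hA hU hR.al ha hS hb hc hM').1 (by simpa using hM)
      obtain ⟨τ, s, r, hp, h⟩ := block_back hs
      refine ⟨_, RR.step hR hp (s := s) (r := r) (τ := τ) ?_⟩
      rw [← h, Matrix.transpose_mul (bid (n+2) s * bid (n+2) r) (exI U)]
      have hB : wed n b c = exI U * (A - exZ A') * (exI U)ᵀ := by
        have h2 := (schur_congr hU _).2 hS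
        unfold Schur at h2
        rw [cong_r0, cong_r1, exI_v1, sub_exZ_r0, sub_exZ_r1] at h2
        have ha1 : A 0 1 = b 1 := by
          have := hb 1
          rw [exI_v1] at this
          simpa using this
        ext p q
        have := congrFun (congrFun h2 p) q
        simp only [Matrix.smul_apply, Matrix.sub_apply, Matrix.vecMulVec_apply, hb, hc,
            smul_eq_mul] at this
        simp only [wed]
        rw [← ha1, ← this]
        field_simp
      rw [hB]
      simp only [Matrix.mul_assoc]

/-! ### words -/

def eS (n : ℕ) : Fin n ⊕ Fin n ≃ Fin (2 * n) := finSumFinEquiv.trans (finCongr (by omega))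

lemma eS_inl {n : ℕ} (p : Fin n) : ((eS n (Sum.inl p) : Fin (2*n)) : ℕ) = p := by simp [eS]
lemma eS_inr {n : ℕ} (p : Fin n) : ((eS n (Sum.inr p) : Fin (2*n)) : ℕ) = n + p := by simp [eS, add_comm]

def xP (n : ℕ) (l : List (ℕ × ℝ)) : Matrix (Fin (2 * n)) (Fin (2 * n)) ℝ :=
  (l.map (fun x => xMat n x.1 x.2)).prod

def Blk (n : ℕ) (l : List (ℕ × ℝ)) (U A : Matrix (Fin n) (Fin n) ℝ) : Prop :=
  ∃ V : Matrix (Fin n) (Fin n) ℝ, U * V = 1 ∧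
    (xP n l).submatrix (eS n) (eS n) = Matrix.fromBlocks U (U * A) 0 Vᵀ

lemma Blk.nil {n : ℕ} : Blk n [] 1 0 := by
  refine ⟨1, by simp, ?_⟩
  simp only [xP, List.map_nil, List.prod_nil, Matrix.submatrix_one_equiv, Matrix.mul_zero,
    Matrix.transpose_one, Matrix.fromBlocks_one]

lemma Blk.append {n : ℕ} {l₁ l₂ : List (ℕ × ℝ)} {U₁ A₁ U₂ A₂ : Matrix (Fin n) (Fin n) ℝ}
    (h₁ : Blk n l₁ U₁ A₁) (h₂ : Blk n l₂ U₂ A₂) {A : Matrix (Fin n) (Fin n) ℝ}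
    (hA : U₂ * (A - A₂) * U₂ᵀ = A₁) : Blk n (l₁ ++ l₂) (U₁ * U₂) A := by
  obtain ⟨V₁, e₁, p₁⟩ := h₁
  obtain ⟨V₂, e₂, p₂⟩ := h₂
  refine ⟨V₂ * V₁, ?_, ?_⟩
  · rw [Matrix.mul_assoc, ← Matrix.mul_assoc U₂, e₂, Matrix.one_mul, e₁]
  · have : xP n (l₁ ++ l₂) = xP n l₁ * xP n l₂ := by simp [xP]
    rw [this, ← Matrix.submatrix_mul_equiv _ _ _ (eS n), p₁, p₂, Matrix.fromBlocks_multiply]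
    have t : U₂ᵀ * V₂ᵀ = 1 := by
      rw [← Matrix.transpose_mul, mul_eq_one_comm.1 e₂, Matrix.transpose_one]
    have k : A₁ * V₂ᵀ = U₂ * (A - A₂) := by
      rw [← hA, Matrix.mul_assoc, t, Matrix.mul_one]
    have : U₁ * (U₂ * A₂) + U₁ * A₁ * V₂ᵀ = U₁ * U₂ * A := by
      rw [Matrix.mul_assoc U₁ A₁, k, Matrix.mul_sub, Matrix.mul_sub, Matrix.mul_assoc]
      abel
    rw [this]
    simp

lemma Blk.unique {n : ℕ} {l : List (ℕ × ℝ)} {U₁ A₁ U₂ A₂ : Matrix (Fin n) (Fin n) ℝ}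
    (h₁ : Blk n l U₁ A₁) (h₂ : Blk n l U₂ A₂) : U₁ = U₂ ∧ A₁ = A₂ := by
  obtain ⟨V₁, e₁, p₁⟩ := h₁
  obtain ⟨V₂, e₂, p₂⟩ := h₂
  rw [p₁, Matrix.fromBlocks_inj] at p₂
  obtain ⟨rfl, h, _, _⟩ := p₂
  refine ⟨rfl, ?_⟩
  have e := mul_eq_one_comm.1 e₁
  rw [← Matrix.one_mul A₁, ← e, Matrix.mul_assoc, h, ← Matrix.mul_assoc, e, Matrix.one_mul]

def Jg (n : ℕ) : Matrix (Fin n) (Fin n) ℝ :=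
  fun p q => if (p : ℕ) + 2 = n ∧ (q : ℕ) + 1 = n then 1
    else if (p : ℕ) + 1 = n ∧ (q : ℕ) + 2 = n then -1 else 0

def gs (i : ℕ) (t : ℝ) : ℕ → ℝ := fun p => if p + 1 = i then t else 0

lemma bid_mul_bid {n : ℕ} (g f : ℕ → ℝ) (h : ∀ p, g p * f (p+1) = 0) :
    bid n g * bid n f = bid n (fun p => g p + f p) := by
  ext p q
  rw [bid_mul_apply]
  simp only [bid]
  have h0 := h p
  split_ifs <;> first | omega | (simp_all; done) | (simp_all [add_comm])

lemma bid_congr {n : ℕ} {g f : ℕ → ℝ} (h : ∀ p, p + 1 < n → g p = f p) : bid n g = bid n f := by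
  ext p q
  simp only [bid]
  split_ifs with h1 h2
  · rfl
  · exact h p (by omega)
  · rfl

lemma bid_zero {n : ℕ} : bid n (fun _ => 0) = 1 := by
  ext p q
  simp only [bid, Matrix.one_apply, Fin.ext_iff]
  split_ifs <;> rfl

lemma Blk.single {n i : ℕ} (hn : 2 ≤ n) (hi : 1 ≤ i) (t : ℝ) :
    Blk n [(i, t)] (bid n (gs i t)) (if i < n then 0 else t • Jg n) := by
  refine ⟨bid n (gs i (-t)), ?_, ?_⟩
  · rw [bid_mul_bid, ← bid_zero]
    · congr 1; funext p; simp only [gs]; split_ifs <;> simp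
    · intro p; simp only [gs]; split_ifs <;> first | omega | simp
  · have hUA : bid n (gs i t) * (if i < n then 0 else t • Jg n) =
        (if i < n then 0 else t • Jg n) := by
      split_ifs with h
      · simp
      · have : bid n (gs i t) = 1 := by
          rw [← bid_zero]
          exact bid_congr fun p hp => by simp only [gs]; rw [if_neg (by omega)]
        rw [this, Matrix.one_mul]
    rw [hUA]
    simp only [xP, List.map_cons, List.map_nil, List.prod_cons, List.prod_nil, mul_one]
    ext p q
    rcases p with p | p <;> rcases q with q | q <;>
      simp only [Matrix.submatrix_apply, xMat, Matrix.of_apply, Matrix.fromBlocks_apply₁₁,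
        Matrix.fromBlocks_apply₁₂, Matrix.fromBlocks_apply₂₁, Matrix.fromBlocks_apply₂₂,
        eS_inl, eS_inr, Matrix.transpose_apply, bid, gs, Matrix.zero_apply]
    · have := p.isLt; have := q.isLt
      split_ifs <;> first | omega | simp
    · have := p.isLt; have := q.isLt
      by_cases h : i < n
      · simp only [h, if_true, Matrix.zero_apply]
        split_ifs <;> first | omega | simp
      · simp only [h, if_false, Matrix.smul_apply, Jg, smul_eq_mul]
        split_ifs <;> first | omega | simp
    · have := p.isLt; have := q.isLt
      split_ifs <;> first | omega | simp
    · have := p.isLt; have := q.isLt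
      split_ifs <;> first | omega | simp

lemma Blk.inv {n : ℕ} {l : List (ℕ × ℝ)} {U A : Matrix (Fin n) (Fin n) ℝ} (h : Blk n l U A)
    (A' B : Matrix (Fin n) (Fin n) ℝ) : ∃ X, U * (X - A') * Uᵀ = B := by
  obtain ⟨V, e, _⟩ := h
  refine ⟨A' + V * B * Vᵀ, ?_⟩
  have t : Vᵀ * Uᵀ = 1 := by rw [← Matrix.transpose_mul, e, Matrix.transpose_one]
  rw [add_sub_cancel_left, ← Matrix.mul_assoc, ← Matrix.mul_assoc, e, Matrix.one_mul,
    Matrix.mul_assoc, t, Matrix.mul_one]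

lemma Blk.exists {n : ℕ} (hn : 2 ≤ n) (l : List (ℕ × ℝ)) (hl : ∀ x ∈ l, 1 ≤ x.1) :
    ∃ U A, Blk n l U A := by
  induction l with
  | nil => exact ⟨_, _, Blk.nil⟩
  | cons x l ih =>
    obtain ⟨U, A, h⟩ := ih fun y hy => hl y (List.mem_cons_of_mem _ hy)
    obtain ⟨X, hX⟩ := h.inv A (if x.1 < n then 0 else x.2 • Jg n)
    exact ⟨_, _, (Blk.single hn (hl x List.mem_cons_self) x.2).append h hX⟩

def sh (x : ℕ × ℝ) : ℕ × ℝ := (x.1 + 2, x.2)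

lemma exI_transpose {n : ℕ} (M : Matrix (Fin n) (Fin n) ℝ) : (exI M)ᵀ = exI Mᵀ := by
  simp [exI, ext1_transpose]
lemma exZ_mul_exI {n : ℕ} (M N : Matrix (Fin n) (Fin n) ℝ) : exZ M * exI N = exZ (M * N) := by
  simp [exI, exZ, ext1_mul]
lemma exZ_zero {n : ℕ} : exZ (0 : Matrix (Fin n) (Fin n) ℝ) = 0 := by simp [exZ, ext1_zero]
lemma exZ_sub {n : ℕ} (M N : Matrix (Fin n) (Fin n) ℝ) : exZ M - exZ N = exZ (M - N) := by
  rw [sub_eq_iff_eq_add]; simp [exZ, ext1_add]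

lemma bid_sh {n i : ℕ} (hi : 1 ≤ i) (t : ℝ) : bid (n+2) (gs (i+2) t) = exI (bid n (gs i t)) := by
  have aux : ∀ m j, 1 ≤ j → bid (m+1) (gs (j+1) t) = ext1 1 (bid m (gs j t)) := by
    intro m j hj
    ext p q
    refine Fin.cases ?_ (fun p => ?_) p <;> refine Fin.cases ?_ (fun q => ?_) q <;>
      simp only [ext1_00, ext1_0s, ext1_s0, ext1_ss, bid, gs, Fin.val_zero, Fin.val_succ] <;>
      grind
  rw [exI, ← aux n i hi, ← aux (n+1) (i+1) (by omega)]

lemma Jg_sh {n : ℕ} (hn : 2 ≤ n) (t : ℝ) : t • Jg (n+2) = exZ (t • Jg n) := by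
  have aux : ∀ m, 2 ≤ m → t • Jg (m+1) = ext1 0 (t • Jg m) := by
    intro m hm
    ext p q
    refine Fin.cases ?_ (fun p => ?_) p <;> refine Fin.cases ?_ (fun q => ?_) q <;>
      simp only [ext1_00, ext1_0s, ext1_s0, ext1_ss, Jg, Matrix.smul_apply, Fin.val_zero,
        Fin.val_succ, smul_eq_mul] <;>
      grind
  rw [exZ, ← aux n hn, ← aux (n+1) (by omega)]

lemma Blk.shift {n : ℕ} (hn : 2 ≤ n) (l : List (ℕ × ℝ)) (hl : ∀ x ∈ l, 1 ≤ x.1) :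
    ∀ {U A : Matrix (Fin n) (Fin n) ℝ}, Blk n l U A → Blk (n+2) (l.map sh) (exI U) (exZ A) := by
  induction l with
  | nil =>
    intro U A h
    obtain ⟨rfl, rfl⟩ := h.unique Blk.nil
    rw [exI_one, exZ_zero]; exact Blk.nil
  | cons x l ih =>
    intro U A h
    have hl' : ∀ y ∈ l, 1 ≤ y.1 := fun y hy => hl y (List.mem_cons_of_mem _ hy)
    have hx := hl x List.mem_cons_self
    obtain ⟨U', A', h'⟩ := Blk.exists hn l hl'
    obtain ⟨X, hX⟩ := h'.inv A' (if x.1 < n then 0 else x.2 • Jg n)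
    obtain ⟨rfl, rfl⟩ := h.unique ((Blk.single hn hx x.2).append h' hX)
    have s := Blk.single (n := n+2) (i := x.1+2) (by omega) (by omega) x.2
    rw [bid_sh hx] at s
    rw [← exI_mul]
    refine s.append (ih hl' h') ?_
    rw [exI_transpose, exZ_sub, exI_mul_exZ, exZ_mul_exI, hX]
    by_cases h : x.1 < n
    · rw [if_pos h, if_pos (by omega), exZ_zero]
    · rw [if_neg h, if_neg (by omega), Jg_sh hn]

def LL : List ℕ → (ℕ → ℝ) → List (ℕ × ℝ)
  | [], _ => []
  | i :: w, t => (i, t 0) :: LL w (fun k => t (k+1))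

lemma LL_append (w₁ w₂ : List ℕ) (t : ℕ → ℝ) :
    LL (w₁ ++ w₂) t = LL w₁ t ++ LL w₂ (fun k => t (k + w₁.length)) := by
  induction w₁ generalizing t with
  | nil => rfl
  | cons i w ih =>
    simp only [List.cons_append, LL, ih, List.length_cons]
    congr 3

lemma LL_map (w : List ℕ) (t : ℕ → ℝ) : LL (w.map (· + 2)) t = (LL w t).map sh := by
  induction w generalizing t with
  | nil => rfl
  | cons i w ih => simp only [List.map_cons, LL, ih, sh]

lemma LL_mem (w : List ℕ) (t : ℕ → ℝ) : ∀ x ∈ LL w t, x.1 ∈ w := by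
  induction w generalizing t with
  | nil => intro x hx; simp [LL] at hx
  | cons i w ih =>
    intro x hx
    simp only [LL, List.mem_cons] at hx
    rcases hx with rfl | hx
    · simp
    · exact List.mem_cons_of_mem _ (ih _ x hx)

lemma LL_eq (w : List ℕ) (t : ℕ → ℝ) :
    (List.range w.length).map (fun l => (w.getD l 0, t l)) = LL w t := by
  induction w generalizing t with
  | nil => rfl
  | cons i w ih =>
    rw [List.length_cons, List.range_succ_eq_map, List.map_cons, List.map_map, LL, ← ih]
    rfl

lemma Blk.run {n b : ℕ} (hn : 2 ≤ n) (hb : 1 ≤ b) (k : ℕ) : ∀ (t : ℕ → ℝ), b + k ≤ n →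
    Blk n (LL (List.range' b k).reverse t)
      (bid n (fun p => if b ≤ p + 1 ∧ p + 1 < b + k then t (b + k - 1 - (p + 1)) else 0)) 0 := by
  induction k with
  | zero =>
    intro t _
    have : (fun p => if b ≤ p + 1 ∧ p + 1 < b + 0 then t (b + 0 - 1 - (p + 1)) else 0) =
        fun _ => (0 : ℝ) := by
      funext p; rw [if_neg (by omega)]
    rw [this, bid_zero]
    exact Blk.nil
  | succ k ih =>
    intro t hk
    have h := ih (fun k => t (k+1)) (by omega)
    have s := Blk.single (n := n) (i := b + k) hn (by omega) (t 0)
    rw [if_pos (by omega)] at s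
    have := s.append h (A := 0) (by simp)
    rw [bid_mul_bid] at this
    · convert this using 2
      · rw [List.range'_concat, List.reverse_append]
        simp [LL]
      · funext p
        simp only [gs]
        split_ifs <;> first | omega | skip
        · have : b + (k+1) - 1 - (p+1) = 0 := by omega
          rw [this]; simp
        · have : b + (k+1) - 1 - (p+1) = b + k - 1 - (p + 1) + 1 := by omega
          rw [this]; simp
        · simp
    · intro p
      simp only [gs]
      split_ifs <;> first | omega | simp

lemma decRun_shift (a b : ℕ) : decRun (a+2) (b+2) = (decRun a b).map (· + 2) := by
  unfold decRun
  rw [List.map_reverse]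
  congr 1
  have e : a + 2 + 1 - (b + 2) = a + 1 - b := by omega
  rw [e]
  apply List.ext_getElem
  · simp
  · intro i _ _; simp; omega

lemma wordD_succ (n : ℕ) : wordD (n+2) =
    [n+2] ++ ((List.range' 1 n).reverse ++ ((List.range' 2 n).reverse ++ (wordD n).map (· + 2))) := by
  unfold wordD
  have : (n+2)/2 = n/2 + 1 := by omega
  rw [this, List.range_succ_eq_map, List.map_cons, List.flatten_cons, List.map_map]
  have e1 : decRun (n+2-2) (2*0+1) = (List.range' 1 n).reverse := by simp [decRun]
  have e2 : decRun (n+2-1) (2*0+2) = (List.range' 2 n).reverse := by simp [decRun]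
  rw [e1, e2]
  simp only [List.cons_append, List.append_assoc, List.nil_append, List.map_flatten, List.map_map]
  congr 4
  apply List.map_congr_left
  intro m hm
  rw [List.mem_range] at hm
  simp only [Function.comp, List.map_cons, List.map_append, ← decRun_shift]
  have a1 : n + 2 - 2 = n - 2 + 2 := by omega
  have a2 : n + 2 - 1 = n - 1 + 2 := by omega
  rw [a1, a2]
  rfl

lemma Npar_succ (n : ℕ) : Npar (n+2) = Npar n + 2 * n + 1 := by
  unfold Npar
  have : (n+2)*(n+2-1) = n*(n-1) + 2*(2*n+1) := by
    cases n with
    | zero => rfl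
    | succ n => simp only [Nat.add_sub_cancel, show n+1+2-1 = n+2 by omega]; ring
  rw [this]; omega

lemma wordD_small {n : ℕ} (h : n < 2) : wordD n = [] := by
  have : n / 2 = 0 := by omega
  simp [wordD, this]

lemma wordD_length (n : ℕ) : (wordD n).length = Npar n := by
  induction n using Nat.twoStepInduction with
  | zero => rfl
  | one => rfl
  | more n ih _ =>
    rw [wordD_succ, Npar_succ, ← ih]
    simp; omega

lemma wordD_pos (n : ℕ) : ∀ i ∈ wordD n, 1 ≤ i := by
  intro i hi
  unfold wordD at hi
  simp only [List.mem_flatten, List.mem_map, List.mem_range] at hi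
  obtain ⟨l, ⟨m, hm, rfl⟩, hi⟩ := hi
  simp only [decRun, List.mem_cons, List.mem_append, List.mem_reverse, List.mem_range'_1] at hi
  omega

lemma LL_pos (n : ℕ) (t : ℕ → ℝ) : ∀ x ∈ LL (wordD n) t, 1 ≤ x.1 :=
  fun x hx => wordD_pos n _ (LL_mem _ _ x hx)

lemma prodX_eq (n : ℕ) (t : ℕ → ℝ) : prodX n t = xP n (LL (wordD n) t) := by
  rw [xP, ← LL_eq, wordD_length, prodX, List.map_map]
  rfl

lemma Blk.amat {n : ℕ} {t : ℕ → ℝ} {U A : Matrix (Fin n) (Fin n) ℝ}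
    (h : Blk n (LL (wordD n) t) U A) : Amat n t = A := by
  obtain ⟨V, e, p⟩ := h
  rw [← prodX_eq] at p
  have h1 : X1 n t = U := by
    ext i j
    have := congrFun (congrFun p (Sum.inl i)) (Sum.inl j)
    rw [Matrix.fromBlocks_apply₁₁] at this
    rw [← this]
    simp only [X1, Matrix.of_apply, Matrix.submatrix_apply]
    congr 1 <;> exact Fin.ext (by rw [eS_inl])
  have h2 : X2 n t = U * A := by
    ext i j
    have := congrFun (congrFun p (Sum.inl i)) (Sum.inr j)
    rw [Matrix.fromBlocks_apply₁₂] at this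
    rw [← this]
    simp only [X2, Matrix.of_apply, Matrix.submatrix_apply]
    congr 1 <;> exact Fin.ext (by first | rw [eS_inl] | rw [eS_inr])
  have e' := mul_eq_one_comm.1 e
  rw [Amat, h1, h2, Matrix.inv_eq_left_inv e', ← Matrix.mul_assoc, e', Matrix.one_mul]

lemma Blk.shift' {n : ℕ} {t : ℕ → ℝ} {U A : Matrix (Fin n) (Fin n) ℝ}
    (h : Blk n (LL (wordD n) t) U A) :
    Blk (n+2) ((LL (wordD n) t).map sh) (exI U) (exZ A) := by
  rcases Nat.lt_or_ge n 2 with hn | hn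
  · rw [wordD_small hn] at h ⊢
    obtain ⟨rfl, rfl⟩ := h.unique Blk.nil
    rw [exI_one, exZ_zero]; exact Blk.nil
  · exact h.shift hn _ (LL_pos n t)

lemma Blk.exists' (n : ℕ) (t : ℕ → ℝ) : ∃ U A, Blk n (LL (wordD n) t) U A := by
  rcases Nat.lt_or_ge n 2 with hn | hn
  · rw [wordD_small hn]; exact ⟨_, _, Blk.nil⟩
  · exact Blk.exists hn _ (LL_pos n t)

lemma Jg_eq (n : ℕ) : Jg (n+2) = Jm n := by
  ext p q
  simp only [Jg, Jm]
  split_ifs <;> first | omega | rfl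

def sPar (n : ℕ) (t : ℕ → ℝ) : ℕ → ℝ := fun p => if p < n then t (n - p) else 0
def rPar (n : ℕ) (t : ℕ → ℝ) : ℕ → ℝ := fun p => if 1 ≤ p ∧ p ≤ n then t (2 * n + 1 - p) else 0

lemma Blk.big {n : ℕ} {t : ℕ → ℝ} {U A' : Matrix (Fin n) (Fin n) ℝ}
    (h : Blk n (LL (wordD n) (fun k => t (k + (2 * n + 1)))) U A') :
    (∀ B, ∃ A, (bid (n+2) (sPar n t) * bid (n+2) (rPar n t) * exI U) * (A - exZ A') *
        (bid (n+2) (sPar n t) * bid (n+2) (rPar n t) * exI U)ᵀ = B) ∧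
    ∀ A, (bid (n+2) (sPar n t) * bid (n+2) (rPar n t) * exI U) * (A - exZ A') *
        (bid (n+2) (sPar n t) * bid (n+2) (rPar n t) * exI U)ᵀ = t 0 • Jm n →
      Blk (n+2) (LL (wordD (n+2)) t) (bid (n+2) (sPar n t) * bid (n+2) (rPar n t) * exI U) A := by
  have h1 := h.shift'
  rw [← LL_map] at h1
  have r2 := Blk.run (n := n+2) (b := 2) (by omega) (by omega) n
    (fun k => t (k + (n + 1))) (by omega)
  have e2 : bid (n+2) (fun p => if 2 ≤ p + 1 ∧ p + 1 < 2 + n then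
      (fun k => t (k + (n + 1))) (2 + n - 1 - (p + 1)) else 0) = bid (n+2) (rPar n t) := by
    apply bid_congr
    intro p hp
    simp only [rPar]
    split_ifs <;> first | omega | rfl | skip
    congr 1; omega
  rw [e2] at r2
  have r1 := Blk.run (n := n+2) (b := 1) (by omega) (by omega) n
    (fun k => t (k + 1)) (by omega)
  have e1 : bid (n+2) (fun p => if 1 ≤ p + 1 ∧ p + 1 < 1 + n then
      (fun k => t (k + 1)) (1 + n - 1 - (p + 1)) else 0) = bid (n+2) (sPar n t) := by
    apply bid_congr
    intro p hp
    simp only [sPar]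
    split_ifs <;> first | omega | rfl | skip
    congr 1; omega
  rw [e1] at r1
  have c2 := r2.append h1 (A := exZ A') (by simp)
  have c1 := r1.append c2 (A := exZ A') (by simp)
  rw [← Matrix.mul_assoc] at c1
  refine ⟨fun B => c1.inv _ B, fun A hA => ?_⟩
  have s := Blk.single (n := n+2) (i := n+2) (by omega) (by omega) (t 0)
  have eb : bid (n+2) (gs (n+2) (t 0)) = 1 := by
    rw [← bid_zero]
    exact bid_congr fun p hp => by simp only [gs]; rw [if_neg (by omega)]
  rw [eb, if_neg (by omega), Jg_eq] at s
  have c := s.append c1 hA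
  rw [Matrix.one_mul] at c
  convert c using 1
  rw [wordD_succ, LL_append, LL_append, LL_append]
  simp only [LL, List.length_cons, List.length_nil, List.length_reverse, List.length_range']
  congr 3
  congr 1
  funext k; congr 1; omega

theorem RR_iff (n : ℕ) : ∀ U A : Matrix (Fin n) (Fin n) ℝ,
    (∃ t : ℕ → ℝ, (∀ i < Npar n, 0 < t i) ∧ Blk n (LL (wordD n) t) U A) ↔ RR n U A := by
  induction n using Nat.twoStepInduction with
  | zero =>
    intro U A
    constructor
    · rintro ⟨t, _, h⟩
      obtain ⟨rfl, rfl⟩ := h.unique Blk.nil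
      exact RR.zero
    · intro h; cases h
      exact ⟨fun _ => 1, fun _ _ => one_pos, Blk.nil⟩
  | one =>
    intro U A
    constructor
    · rintro ⟨t, _, h⟩
      obtain ⟨rfl, rfl⟩ := h.unique Blk.nil
      exact RR.one
    · intro h; cases h
      exact ⟨fun _ => 1, fun _ _ => one_pos, Blk.nil⟩
  | more n ih _ =>
    intro U A
    constructor
    · rintro ⟨t, ht, h⟩
      rw [Npar_succ] at ht
      obtain ⟨U', A', h'⟩ := Blk.exists' n (fun k => t (k + (2 * n + 1)))
      obtain ⟨f1, f2⟩ := h'.big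
      obtain ⟨X, hX⟩ := f1 (t 0 • Jm n)
      obtain ⟨rfl, rfl⟩ := h.unique (f2 X hX)
      refine RR.step ((ih U' A').1 ⟨_, ?_, h'⟩) ?_ hX
      · intro i hi
        exact ht _ (by omega)
      · refine ⟨ht 0 (by omega), ?_, ?_, ?_, ?_⟩
        · intro i hi
          simp only [sPar]; rw [if_pos hi]; exact ht _ (by omega)
        · intro i h1 h2
          simp only [rPar]; rw [if_pos ⟨h1, h2⟩]; exact ht _ (by omega)
        · simp [sPar]
        · simp [rPar]
    · intro h
      cases h with
      | @step _ U' A' τ s r _ hR hp h =>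
        obtain ⟨t', ht', hb⟩ := (ih U' A').2 hR
        let t : ℕ → ℝ := fun k => if k = 0 then τ else if k < n + 1 then s (n - k)
          else if k < 2 * n + 1 then r (2 * n + 1 - k) else t' (k - (2 * n + 1))
        have e0 : t 0 = τ := rfl
        have et : (fun k => t (k + (2 * n + 1))) = t' := by
          funext k
          simp only [t]
          rw [if_neg (by omega), if_neg (by omega), if_neg (by omega), Nat.add_sub_cancel]
        have es : bid (n+2) (sPar n t) = bid (n+2) s := by
          apply bid_congr
          intro p hp'
          simp only [sPar]
          split_ifs with h1
          · simp only [t]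
            rw [if_neg (by omega), if_pos (by omega)]
            congr 1; omega
          · have : p = n := by omega
            rw [this, hp.s0]
        have er : bid (n+2) (rPar n t) = bid (n+2) r := by
          apply bid_congr
          intro p hp'
          simp only [rPar]
          split_ifs with h1
          · simp only [t]
            rw [if_neg (by omega), if_neg (by omega), if_pos (by omega)]
            congr 1; omega
          · have : p = 0 := by omega
            rw [this, hp.r0]
        have hb' : Blk n (LL (wordD n) (fun k => t (k + (2 * n + 1)))) U' A' := by rw [et]; exact hb
        have f2 := hb'.big.2 A
        rw [es, er, e0] at f2
        refine ⟨t, ?_, f2 h⟩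
        intro i hi
        rw [Npar_succ] at hi
        simp only [t]
        split_ifs with h1 h2 h3
        · exact hp.τpos
        · exact hp.spos _ (by omega)
        · exact hp.rpos _ (by omega) (by omega)
        · exact ht' _ (by omega)

theorem Spos_iff (n : ℕ) (A : Matrix (Fin n) (Fin n) ℝ) : A ∈ Spos n ↔ ∃ U, RR n U A := by
  constructor
  · rintro ⟨t, ht, h⟩
    obtain ⟨U, A', hb⟩ := Blk.exists' n t
    rw [hb.amat] at h
    subst h
    exact ⟨U, (RR_iff n U A).1 ⟨t, ht, hb⟩⟩
  · rintro ⟨U, h⟩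
    obtain ⟨t, ht, hb⟩ := (RR_iff n U A).2 h
    exact ⟨t, ht, hb.amat.symm⟩

/-- A skew-symmetric matrix `A` is totally positive iff `M_{j,k}(A) > 0`
for all `1 ≤ j ≤ k ≤ n-1`. -/
theorem skew_totally_positive_iff_minors_pos
    (n : ℕ) (hn : 2 ≤ n) (A : Matrix (Fin n) (Fin n) ℝ) (hA : Aᵀ = -A) :
    A ∈ Spos n ↔ ∀ j k : ℕ, 1 ≤ j → j ≤ k → k ≤ n - 1 → 0 < Mminor n j k A := by
  rw [Spos_iff]
  exact main_RR n A hA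
end
end

section
/- There do not exist an integer r < n(n−1)/2 and real polynomials f_1,…,f_r in the n(n−1)/2 variables (a_{pq})_{1≤p<q≤n} such that for every n×n real skew-symmetric matrix A (with above-diagonal entries a_{pq}), A ∈ S_n^{>0} holds if and only if f_i(A) > 0 for all 1 ≤ i ≤ r. In other words, the positivity test by the n(n−1)/2 minors M_{j,k} uses the fewest possible number of polynomial inequalities. -/
noncomputable section

open Matrix

/-! ### Sign patterns of polynomials -/

lemma poly_sign (q : Polynomial ℝ) (c : ℝ) (hc : 0 < q.leadingCoeff * c) (s : ℤˣ) :
    ∀ᶠ M : ℝ in Filter.atTop,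
      0 < q.eval ((((s : ℤ) : ℝ)) * M) * (c * (((s ^ q.natDegree : ℤˣ) : ℤ) : ℝ)) := by
  have key : ∀ q : Polynomial ℝ, 0 < q.leadingCoeff * c →
      ∀ᶠ M : ℝ in Filter.atTop, 0 < q.eval M * c := by
    intro q hc
    have h1 : 0 < (q * Polynomial.C c).leadingCoeff := by
      rw [Polynomial.leadingCoeff_mul, Polynomial.leadingCoeff_C]; exact hc
    have h2 := (Polynomial.isEquivalent_atTop_lead (q * Polynomial.C c))
    have h3 : ∀ᶠ M : ℝ in Filter.atTop,
        0 < (q * Polynomial.C c).leadingCoeff * M ^ (q * Polynomial.C c).natDegree := by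
      filter_upwards [Filter.eventually_gt_atTop 0] with M hM
      positivity
    have h4 := h2.symm.exists_eq_mul
    obtain ⟨φ, hφ, he⟩ := h2.exists_eq_mul
    have h5 : ∀ᶠ M : ℝ in Filter.atTop, 0 < φ M :=
      hφ.eventually (lt_mem_nhds one_pos)
    filter_upwards [h3, he, h5] with M a b d
    have : q.eval M * c = (q * Polynomial.C c).eval M := by simp
    rw [this, b]
    exact mul_pos d a
  rcases Int.units_eq_one_or s with rfl | rfl
  · simpa using key q hc
  · have hd : (q.comp (-Polynomial.X)).leadingCoeff = q.leadingCoeff * (-1) ^ q.natDegree := by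
      rw [Polynomial.leadingCoeff_comp (by simp)]
      simp
    have h2 : 0 < (q.comp (-Polynomial.X) * Polynomial.C ((-1) ^ q.natDegree)).leadingCoeff * c := by
      rw [Polynomial.leadingCoeff_mul, Polynomial.leadingCoeff_C, hd]
      have e : ((-1 : ℝ) ^ q.natDegree) * (-1 : ℝ) ^ q.natDegree = 1 := by
        rw [← mul_pow]; simp
      have : q.leadingCoeff * (-1) ^ q.natDegree * (-1) ^ q.natDegree * c = q.leadingCoeff * c := by
        rw [mul_assoc q.leadingCoeff, e, mul_one]
      rw [this]; exact hc
    filter_upwards [key _ h2] with M hM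
    simp at hM ⊢
    rw [mul_comm c, ← mul_assoc]
    exact hM

lemma fan_lemma {ι : Type} [Finite ι] (N : ℕ) : ∀ (F : ι → MvPolynomial (Fin N) ℝ),
    (∀ i, F i ≠ 0) →
    ∃ ε : Fin N → ℝ, (∀ j, 0 < ε j) ∧ ∃ (a : ι → Fin N → ℕ) (c : ι → ℝ),
      ∀ i (σ : Fin N → ℤˣ),
        0 < MvPolynomial.eval (fun j => ((σ j : ℤ) : ℝ) * ε j) (F i) *
          (c i * (((∏ j, σ j ^ a i j : ℤˣ) : ℤ) : ℝ)) := by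
  induction N with
  | zero =>
    intro F hF
    refine ⟨fun _ => 1, fun _ => one_pos, fun _ _ => 0,
      fun i => MvPolynomial.eval (fun j => j.elim0) (F i), fun i σ => ?_⟩
    have h0 : (fun j => ((σ j : ℤ) : ℝ) * 1) = (fun j : Fin 0 => (j.elim0 : ℝ)) := by
      funext j; exact j.elim0
    rw [h0]
    simp only [Finset.univ_eq_empty, Finset.prod_empty, Units.val_one, Int.cast_one, mul_one]
    apply mul_self_pos.2
    intro h
    apply hF i
    apply MvPolynomial.funext
    intro x
    have : x = (fun j : Fin 0 => (j.elim0 : ℝ)) := by funext j; exact j.elim0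
    rw [this, h]; simp
  | succ N ih =>
    intro F hF
    let P : ι → Polynomial (MvPolynomial (Fin N) ℝ) := fun i => MvPolynomial.finSuccEquiv ℝ N (F i)
    have hP : ∀ i, P i ≠ 0 := fun i h => hF i (by simpa [P] using h)
    obtain ⟨ε, hε, a, c, H⟩ := ih (fun i => (P i).leadingCoeff)
      (fun i => Polynomial.leadingCoeff_ne_zero.2 (hP i))
    have ev : ∀ᶠ M : ℝ in Filter.atTop, ∀ (i : ι) (σ : Fin N → ℤˣ) (s : ℤˣ),
        0 < ((P i).map (MvPolynomial.eval (fun j => ((σ j : ℤ) : ℝ) * ε j))).eval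
            ((((s : ℤ) : ℝ)) * M) *
          ((c i * (((∏ j, σ j ^ a i j : ℤˣ) : ℤ) : ℝ)) * (((s ^ (P i).natDegree : ℤˣ) : ℤ) : ℝ)) := by
      rw [Filter.eventually_all]; intro i
      rw [Filter.eventually_all]; intro σ
      rw [Filter.eventually_all]; intro s
      have h1 := H i σ
      have hne : MvPolynomial.eval (fun j => ((σ j : ℤ) : ℝ) * ε j) (P i).leadingCoeff ≠ 0 := by
        intro h; rw [h] at h1; simp at h1
      have hd := Polynomial.natDegree_map_of_leadingCoeff_ne_zero _ hne
      have hl := Polynomial.leadingCoeff_map_of_leadingCoeff_ne_zero _ hne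
      have := poly_sign ((P i).map (MvPolynomial.eval (fun j => ((σ j : ℤ) : ℝ) * ε j)))
        (c i * (((∏ j, σ j ^ a i j : ℤˣ) : ℤ) : ℝ)) (by rw [hl]; exact h1) s
      rw [hd] at this
      exact this
    obtain ⟨M, hM, hM0⟩ := (ev.and (Filter.eventually_gt_atTop 0)).exists
    refine ⟨Fin.cons M ε, ?_, fun i => Fin.cons (P i).natDegree (a i), c, ?_⟩
    · intro j
      refine Fin.cases ?_ ?_ j
      · exact hM0
      · intro j; simpa using hε j
    · intro i σ
      have h := hM i (fun j => σ j.succ) (σ 0)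
      have e1 : (fun j => ((σ j : ℤ) : ℝ) * (Fin.cons M ε : Fin (N + 1) → ℝ) j) =
          Fin.cons (((σ 0 : ℤ) : ℝ) * M) (fun j : Fin N => ((σ j.succ : ℤ) : ℝ) * ε j) := by
        funext j
        refine Fin.cases ?_ ?_ j
        · simp
        · intro j; simp
      rw [e1, MvPolynomial.eval_eq_eval_mv_eval', Fin.prod_univ_succ]
      simp only [Fin.cons_zero, Fin.cons_succ]
      convert h using 2
      push_cast
      ring

lemma exists_sign {r N : ℕ} (h : r < N) (a : Fin r → Fin N → ℕ) :
    ∃ σ : Fin N → ℤˣ, σ ≠ 1 ∧ ∀ i, ∏ j, σ j ^ a i j = 1 := by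
  have hc : Fintype.card (Fin r → ℤˣ) < Fintype.card (Fin N → ℤˣ) := by
    simp only [Fintype.card_fun, Fintype.card_units_int, Fintype.card_fin]
    exact Nat.pow_lt_pow_right (by norm_num) h
  obtain ⟨x, y, hxy, he⟩ := Fintype.exists_ne_map_eq_of_card_lt
    (fun (σ : Fin N → ℤˣ) (i : Fin r) => ∏ j, σ j ^ a i j) hc
  refine ⟨x / y, fun h => hxy (div_eq_one.1 h), fun i => ?_⟩
  have := congrFun he i
  simp only [Pi.div_apply, div_pow, Finset.prod_div_distrib, this, div_self']

/-! ### Vector / form dynamics -/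

def vT (n i : ℕ) (t : ℝ) (v : ℕ → ℝ) : ℕ → ℝ :=
  fun p => v p - if i < n ∧ p = i then t * v (p + 1) else 0

def vG (n : ℕ) : List (ℕ × ℝ) → (ℕ → ℝ) → (ℕ → ℝ)
  | [], v => v
  | x :: L, v => vG n L (vT n x.1 x.2 v)

def vE (k : ℕ) (c : ℝ) : ℕ → ℝ := fun p => if p = k then c else 0

def wdg (u y : ℕ → ℝ) : ℕ → ℕ → ℝ := fun p q => u p * y q - u q * y p

def fact (n i : ℕ) (t : ℝ) (B : ℕ → ℕ → ℝ) : ℕ → ℕ → ℝ :=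
  fun p q => vT n i t (fun p' => vT n i t (B p') q) p +
    if i < n then 0 else wdg (vE (n - 1) t) (vE n 1) p q

def frun (n : ℕ) : List (ℕ × ℝ) → (ℕ → ℕ → ℝ) → (ℕ → ℕ → ℝ)
  | [], B => B
  | x :: L, B => frun n L (fact n x.1 x.2 B)

lemma vG_append (n : ℕ) (L M : List (ℕ × ℝ)) (v : ℕ → ℝ) :
    vG n (L ++ M) v = vG n M (vG n L v) := by
  induction L generalizing v with
  | nil => rfl
  | cons x L ih => simp [vG, ih]

lemma frun_append (n : ℕ) (L M : List (ℕ × ℝ)) (B) :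
    frun n (L ++ M) B = frun n M (frun n L B) := by
  induction L generalizing B with
  | nil => rfl
  | cons x L ih => simp [frun, ih]

lemma vT_lin (n i : ℕ) (t a b : ℝ) (v w : ℕ → ℝ) :
    vT n i t (a • v + b • w) = a • vT n i t v + b • vT n i t w := by
  funext p
  simp only [vT, Pi.add_apply, Pi.smul_apply, smul_eq_mul]
  split_ifs <;> ring

lemma vG_lin (n : ℕ) (L : List (ℕ × ℝ)) (a b : ℝ) (v w : ℕ → ℝ) :
    vG n L (a • v + b • w) = a • vG n L v + b • vG n L w := by
  induction L generalizing v w with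
  | nil => rfl
  | cons x L ih => simp only [vG, vT_lin, ih]

lemma vG_smul (n : ℕ) (L : List (ℕ × ℝ)) (a : ℝ) (v : ℕ → ℝ) :
    vG n L (a • v) = a • vG n L v := by
  have := vG_lin n L a 0 v v
  simpa using this

lemma vT_inj (n i : ℕ) (t : ℝ) (v w : ℕ → ℝ) (h : vT n i t v = vT n i t w) : v = w := by
  have h1 : v (i + 1) = w (i + 1) := by
    have := congrFun h (i + 1)
    simpa [vT] using this
  funext p
  have := congrFun h p
  simp only [vT] at this
  split_ifs at this with hc
  · obtain ⟨_, rfl⟩ := hc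
    rw [h1] at this; linarith
  · linarith

lemma vG_inj (n : ℕ) (L : List (ℕ × ℝ)) (v w : ℕ → ℝ) (h : vG n L v = vG n L w) : v = w := by
  induction L generalizing v w with
  | nil => exact h
  | cons x L ih => exact vT_inj _ _ _ _ _ (ih _ _ h)

lemma vG_fix (n : ℕ) (L : List (ℕ × ℝ)) (v : ℕ → ℝ) (p : ℕ) (h : ∀ x ∈ L, x.1 ≠ p) :
    vG n L v p = v p := by
  induction L generalizing v with
  | nil => rfl
  | cons x L ih =>
    simp only [vG]
    rw [ih _ (fun y hy => h y (List.mem_cons_of_mem _ hy))]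
    have := h x List.mem_cons_self
    simp only [vT]
    rw [if_neg]; · ring
    rintro ⟨_, h2⟩; exact this h2.symm

lemma vG_fixE (n : ℕ) (L : List (ℕ × ℝ)) (k : ℕ) (c : ℝ) (h : ∀ x ∈ L, x.1 + 1 ≠ k) :
    vG n L (vE k c) = vE k c := by
  induction L with
  | nil => rfl
  | cons x L ih =>
    simp only [vG]
    have hx := h x List.mem_cons_self
    have : vT n x.1 x.2 (vE k c) = vE k c := by
      funext p
      simp only [vT, vE]
      split_ifs with h1 h2 h3 <;> simp
      all_goals omega
    rw [this, ih (fun y hy => h y (List.mem_cons_of_mem _ hy))]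

lemma fact_wdg (n i : ℕ) (t : ℝ) (u y : ℕ → ℝ) (C : ℕ → ℕ → ℝ) :
    fact n i t (wdg u y + C) = wdg (vT n i t u) (vT n i t y) + fact n i t C := by
  funext p q
  simp only [fact, vT, wdg, Pi.add_apply]
  split_ifs <;> ring

lemma frun_wdg (n : ℕ) (L : List (ℕ × ℝ)) (u y : ℕ → ℝ) (C : ℕ → ℕ → ℝ) :
    frun n L (wdg u y + C) = wdg (vG n L u) (vG n L y) + frun n L C := by
  induction L generalizing u y C with
  | nil => rfl
  | cons x L ih => simp only [frun, vG, fact_wdg, ih]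

lemma frun_supp (n b : ℕ) (L : List (ℕ × ℝ)) (h : ∀ x ∈ L, b < x.1 ∧ b + 1 < n)
    (C : ℕ → ℕ → ℝ) (hC : ∀ p q, p ≤ b ∨ q ≤ b → C p q = 0) :
    ∀ p q, p ≤ b ∨ q ≤ b → frun n L C p q = 0 := by
  induction L generalizing C with
  | nil => exact hC
  | cons x L ih =>
    simp only [frun]
    apply ih (fun y hy => h y (List.mem_cons_of_mem _ hy))
    intro p q hpq
    have hx := h x List.mem_cons_self
    simp only [fact, vT, wdg, vE]
    have h1 : C p q = 0 := hC p q hpq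
    by_cases hp : p ≤ b
    · have h2 := hC p (q+1) (Or.inl hp)
      rw [h1, h2]
      split_ifs <;> first | omega | simp
    · have hq : q ≤ b := by omega
      have h2 := hC (p+1) q (Or.inr hq)
      rw [h1, h2]
      split_ifs <;> first | omega | simp

lemma decRun_nil (a b : ℕ) (h : a < b) : decRun a b = [] := by
  have : a + 1 - b = 0 := by omega
  simp [decRun, this]

lemma decRun_succ (a b : ℕ) (h : b ≤ a + 1) : decRun (a + 1) b = (a + 1) :: decRun a b := by
  have : a + 1 + 1 - b = (a + 1 - b) + 1 := by omega
  rw [decRun, decRun, this, List.range'_concat]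
  simp; omega

lemma mem_decRun (a b x : ℕ) : x ∈ decRun a b ↔ b ≤ x ∧ x ≤ a := by
  simp [decRun, List.mem_range'_1]; omega

lemma mem_of_map (L : List (ℕ × ℝ)) (w : List ℕ) (h : L.map Prod.fst = w) (x : ℕ × ℝ)
    (hx : x ∈ L) : x.1 ∈ w := by
  rw [← h]; exact List.mem_map_of_mem hx

lemma vT_E (n a : ℕ) (t c : ℝ) (ha : a < n) :
    vT n a t (vE (a + 1) c) = (1 : ℝ) • vE (a + 1) c + (1 : ℝ) • vE a (-(t * c)) := by
  funext p
  simp only [vT, vE, Pi.add_apply, Pi.smul_apply, smul_eq_mul]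
  split_ifs <;> first | omega | simp

lemma chain_step (n a b : ℕ) (L : List (ℕ × ℝ)) (t c : ℝ) (ha : a < n)
    (hL : L.map Prod.fst = decRun (a - 1) b) (ha1 : 1 ≤ a) :
    vG n ((a, t) :: L) (vE (a + 1) c) = vE (a + 1) c + vG n L (vE a (-(t * c))) := by
  simp only [vG]
  rw [vT_E _ _ _ _ ha, vG_lin, vG_fixE n L (a + 1)]
  · simp
  · intro x hx
    have := mem_of_map L _ hL x hx
    rw [mem_decRun] at this; omega

lemma chain_ne (n b : ℕ) (hb : 1 ≤ b) (a : ℕ) : ∀ (L : List (ℕ × ℝ)) (c : ℝ), a < n →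
    b ≤ a + 1 → L.map Prod.fst = decRun a b → (∀ x ∈ L, x.2 ≠ 0) → c ≠ 0 →
    vG n L (vE (a + 1) c) b ≠ 0 := by
  induction a with
  | zero =>
    intro L c ha hab hL h0 hc
    have : b = 1 := by omega
    subst this
    rw [decRun_nil 0 1 (by omega)] at hL
    simp at hL; subst hL
    simpa [vG, vE] using hc
  | succ a ih =>
    intro L c ha hab hL h0 hc
    by_cases hba : b = a + 2
    · subst hba
      rw [decRun_nil _ _ (by omega)] at hL
      simp at hL; subst hL
      simpa [vG, vE] using hc
    · rw [decRun_succ a b (by omega)] at hL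
      obtain ⟨⟨x, t⟩, L', rfl, hx, hL'⟩ := List.map_eq_cons_iff.1 hL
      simp only at hx; subst hx
      rw [chain_step n (a + 1) b L' t c ha (by simpa using hL') (by omega)]
      have : vE (a + 1 + 1) c b = 0 := by simp [vE]; omega
      simp only [Pi.add_apply, this, zero_add]
      apply ih L' _ (by omega) (by omega) hL' (fun y hy => h0 y (List.mem_cons_of_mem _ hy))
      have := h0 (a + 1, t) List.mem_cons_self
      simpa using ⟨this, hc⟩

lemma chain_top (n b a : ℕ) (L : List (ℕ × ℝ)) (c : ℝ) (p : ℕ)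
    (hL : L.map Prod.fst = decRun a b) (hp : a < p) :
    vG n L (vE (a + 1) c) p = vE (a + 1) c p := by
  apply vG_fix
  intro x hx
  have := mem_of_map L _ hL x hx
  rw [mem_decRun] at this; omega

lemma chain_inj (n b : ℕ) (hb : 1 ≤ b) (a : ℕ) : ∀ (L L' : List (ℕ × ℝ)) (c c' : ℝ), a < n →
    L.map Prod.fst = decRun a b → L'.map Prod.fst = decRun a b →
    (∀ x ∈ L, x.2 ≠ 0) → (∀ x ∈ L', x.2 ≠ 0) → c ≠ 0 → c' ≠ 0 →
    vG n L (vE (a + 1) c) = vG n L' (vE (a + 1) c') → c = c' ∧ L = L' := by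
  induction a with
  | zero =>
    intro L L' c c' ha hL hL' h0 h0' hc hc' h
    have h1 := congrFun h 1
    rw [chain_top n b 0 L c 1 hL (by omega), chain_top n b 0 L' c' 1 hL' (by omega)] at h1
    rw [decRun_nil 0 b (by omega)] at hL hL'
    simp at hL hL'
    refine ⟨by simpa [vE] using h1, by rw [hL, hL']⟩
  | succ a ih =>
    intro L L' c c' ha hL hL' h0 h0' hc hc' h
    have h1 := congrFun h (a + 1 + 1)
    rw [chain_top n b _ L c _ hL (by omega), chain_top n b _ L' c' _ hL' (by omega)] at h1
    have hcc : c = c' := by simpa [vE] using h1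
    subst hcc
    refine ⟨rfl, ?_⟩
    by_cases hba : a + 1 < b
    · rw [decRun_nil _ b (by omega)] at hL hL'
      simp at hL hL'
      rw [hL, hL']
    · rw [decRun_succ a b (by omega)] at hL hL'
      obtain ⟨⟨x, t⟩, M, rfl, hx, hM⟩ := List.map_eq_cons_iff.1 hL
      obtain ⟨⟨x', t'⟩, M', rfl, hx', hM'⟩ := List.map_eq_cons_iff.1 hL'
      simp only at hx hx'; subst hx; subst hx'
      rw [chain_step n (a + 1) b M t c ha (by simpa using hM) (by omega),
        chain_step n (a + 1) b M' t' c ha (by simpa using hM') (by omega)] at h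
      have h := add_left_cancel h
      have ht := h0 (a + 1, t) List.mem_cons_self
      have ht' := h0' (a + 1, t') List.mem_cons_self
      simp only at ht ht'
      obtain ⟨h2, h3⟩ := ih M M' _ _ (by omega) hM hM'
        (fun y hy => h0 y (List.mem_cons_of_mem _ hy))
        (fun y hy => h0' y (List.mem_cons_of_mem _ hy)) (by simpa using ⟨ht, hc⟩)
        (by simpa using ⟨ht', hc⟩) h
      have : t = t' := by
        apply mul_right_cancel₀ hc; linarith
      rw [h3, this]

def blk (n m : ℕ) : List ℕ := n :: (decRun (n - 2) (2 * m + 1) ++ decRun (n - 1) (2 * m + 2))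

def wtail (n m k : ℕ) : List ℕ := ((List.range' m k).map (blk n)).flatten

lemma mem_wtail (n m k x : ℕ) (hmk : m + k = n / 2) (hx : x ∈ wtail n m k) :
    2 * m < x ∧ 2 * m + 1 < n := by
  simp only [wtail, List.mem_flatten, List.mem_map, List.mem_range'_1] at hx
  obtain ⟨l, ⟨j, hj, rfl⟩, hx⟩ := hx
  simp only [blk, List.mem_cons, List.mem_append, mem_decRun] at hx
  omega

lemma schur (u y : ℕ → ℝ) (C B : ℕ → ℕ → ℝ) (a b : ℕ) (hya : y a = 0) (hyb : y b ≠ 0)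
    (hua : u a ≠ 0) (hC : ∀ q, C a q = 0) (hC' : ∀ q, C b q = 0) (hB : B = wdg u y + C) :
    ∀ p q, C p q = B p q - (B a p * B b q - B a q * B b p) / B a b := by
  intro p q
  have h1 : B a b = u a * y b := by rw [hB]; simp [wdg, hya, hC]
  have h2 : ∀ q, B a q = u a * y q := by intro q; rw [hB]; simp [wdg, hya, hC]
  have h3 : ∀ q, B b q = u b * y q - u q * y b := by intro q; rw [hB]; simp [wdg, hC']
  have h4 : B p q = u p * y q - u q * y p + C p q := by rw [hB]; simp [wdg]
  rw [h1, h2, h2, h3, h3, h4]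
  field_simp
  ring

lemma block_form (n : ℕ) (hn : 2 ≤ n) (t : ℝ) (L1 L2 R : List (ℕ × ℝ)) (m : ℕ)
    (h1 : L1.map Prod.fst = decRun (n - 2) (2 * m + 1))
    (h2 : L2.map Prod.fst = decRun (n - 1) (2 * m + 2)) :
    frun n ((n, t) :: (L1 ++ L2) ++ R) 0 =
      wdg (vG n R (vG n L2 (vG n L1 (vE (n - 1) t)))) (vG n R (vG n L2 (vE n 1))) +
        frun n R 0 := by
  have e0 : fact n n t 0 = wdg (vE (n - 1) t) (vE n 1) + 0 := by
    funext p q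
    simp [fact, vT]
  have ez : ∀ L : List (ℕ × ℝ), (∀ x ∈ L, x.1 < n) → frun n L 0 = 0 := by
    intro L
    induction L with
    | nil => intro _; rfl
    | cons x L ih =>
      intro h
      simp only [frun]
      have : fact n x.1 x.2 0 = 0 := by
        funext p q
        have := h x List.mem_cons_self
        simp [fact, vT, this]
      rw [this]; exact ih (fun y hy => h y (List.mem_cons_of_mem _ hy))
  have i1 : ∀ x ∈ L1, x.1 < n - 1 := by
    intro x hx
    have := mem_of_map L1 _ h1 x hx
    rw [mem_decRun] at this; omega
  have i2 : ∀ x ∈ L2, x.1 < n := by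
    intro x hx
    have := mem_of_map L2 _ h2 x hx
    rw [mem_decRun] at this; omega
  have e3 : vG n L1 (vE n 1) = vE n 1 := by
    apply vG_fixE
    intro x hx
    have := i1 x hx; omega
  rw [frun_append]
  simp only [frun]
  rw [frun_append, e0, frun_wdg, frun_wdg, frun_wdg, ez L1 (fun x hx => by have := i1 x hx; omega),
    ez L2 i2, e3]

lemma frun_inj (n : ℕ) (hn : 2 ≤ n) (k : ℕ) : ∀ (m : ℕ) (L L' : List (ℕ × ℝ)), m + k = n / 2 →
    L.map Prod.fst = wtail n m k → L'.map Prod.fst = wtail n m k →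
    (∀ x ∈ L, x.2 ≠ 0) → (∀ x ∈ L', x.2 ≠ 0) → frun n L 0 = frun n L' 0 → L = L' := by
  induction k with
  | zero =>
    intro m L L' _ h h' _ _ _
    simp [wtail] at h h'
    rw [h, h']
  | succ k ih =>
    intro m L L' hmk hL hL' h0 h0' hrun
    have hw : wtail n m (k + 1) = (n :: (decRun (n - 2) (2 * m + 1) ++ decRun (n - 1) (2 * m + 2)))
        ++ wtail n (m + 1) k := by
      simp [wtail, blk, List.range'_succ]
    have split : ∀ L : List (ℕ × ℝ), L.map Prod.fst = wtail n m (k + 1) →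
        ∃ (t : ℝ) (L1 L2 R : List (ℕ × ℝ)), L = (n, t) :: (L1 ++ L2) ++ R ∧
          L1.map Prod.fst = decRun (n - 2) (2 * m + 1) ∧
          L2.map Prod.fst = decRun (n - 1) (2 * m + 2) ∧
          R.map Prod.fst = wtail n (m + 1) k := by
      intro L hL
      rw [hw] at hL
      obtain ⟨B, R, rfl, hB, hR⟩ := List.map_eq_append_iff.1 hL
      obtain ⟨⟨x, t⟩, B', rfl, hx, hB'⟩ := List.map_eq_cons_iff.1 hB
      obtain ⟨L1, L2, rfl, h1, h2⟩ := List.map_eq_append_iff.1 hB'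
      simp only at hx; subst hx
      exact ⟨t, L1, L2, R, rfl, h1, h2, hR⟩
    obtain ⟨t, L1, L2, R, rfl, h1, h2, hR⟩ := split L hL
    obtain ⟨t', L1', L2', R', rfl, h1', h2', hR'⟩ := split L' hL'
    have facts : ∀ (t : ℝ) (L1 L2 R : List (ℕ × ℝ)),
        L1.map Prod.fst = decRun (n - 2) (2 * m + 1) →
        L2.map Prod.fst = decRun (n - 1) (2 * m + 2) →
        R.map Prod.fst = wtail n (m + 1) k →
        (∀ x ∈ (n, t) :: (L1 ++ L2) ++ R, x.2 ≠ 0) →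
        (vG n R (vG n L2 (vE n 1))) (2 * m + 1) = 0 ∧
        (vG n R (vG n L2 (vE n 1))) (2 * m + 2) ≠ 0 ∧
        (vG n R (vG n L2 (vG n L1 (vE (n - 1) t)))) (2 * m + 1) ≠ 0 ∧
        (∀ p q, p ≤ 2 * m + 2 ∨ q ≤ 2 * m + 2 → frun n R 0 p q = 0) := by
      intro t L1 L2 R h1 h2 hR h0
      have iR : ∀ x ∈ R, 2 * m + 2 < x.1 ∧ 2 * m + 2 + 1 < n := by
        intro x hx
        have := mem_wtail n (m + 1) k _ (by omega) (mem_of_map R _ hR x hx)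
        omega
      have i2 : ∀ x ∈ L2, 2 * m + 2 ≤ x.1 := by
        intro x hx
        have := mem_of_map L2 _ h2 x hx
        rw [mem_decRun] at this; omega
      refine ⟨?_, ?_, ?_, ?_⟩
      · rw [vG_fix n R _ _ (fun x hx => by have := iR x hx; omega),
          vG_fix n L2 _ _ (fun x hx => by have := i2 x hx; omega)]
        simp [vE]; omega
      · rw [vG_fix n R _ _ (fun x hx => by have := iR x hx; omega)]
        have := chain_ne n (2 * m + 2) (by omega) (n - 1) L2 1 (by omega) (by omega) h2
          (fun x hx => h0 x (by simp [hx])) one_ne_zero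
        rwa [show n - 1 + 1 = n by omega] at this
      · rw [vG_fix n R _ _ (fun x hx => by have := iR x hx; omega),
          vG_fix n L2 _ _ (fun x hx => by have := i2 x hx; omega)]
        have := chain_ne n (2 * m + 1) (by omega) (n - 2) L1 t (by omega) (by omega) h1
          (fun x hx => h0 x (by simp [hx])) (h0 (n, t) (by simp))
        rwa [show n - 2 + 1 = n - 1 by omega] at this
      · exact frun_supp n _ R iR 0 (fun _ _ _ => rfl)
    obtain ⟨f1, f2, f3, f4⟩ := facts t L1 L2 R h1 h2 hR h0
    obtain ⟨f1', f2', f3', f4'⟩ := facts t' L1' L2' R' h1' h2' hR' h0'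
    rw [block_form n hn t L1 L2 R m h1 h2] at hrun
    rw [block_form n hn t' L1' L2' R' m h1' h2'] at hrun
    have s1 := schur _ _ _ _ _ _ f1 f2 f3 (fun q => f4 _ q (by omega)) (fun q => f4 _ q (by omega))
      rfl
    have s2 := schur _ _ _ _ _ _ f1' f2' f3' (fun q => f4' _ q (by omega))
      (fun q => f4' _ q (by omega)) hrun
    have hRR : frun n R 0 = frun n R' 0 := by
      funext p q
      rw [s1, s2]
    have hReq : R = R' := ih (m + 1) R R' (by omega) hR hR' (fun x hx => h0 x (by simp [hx]))
      (fun x hx => h0' x (by simp [hx])) hRR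
    subst hReq
    have hwd := add_right_cancel hrun
    clear hrun s1 s2 hRR
    -- second half
    have hrow : (vG n R (vG n L2 (vG n L1 (vE (n - 1) t)))) (2 * m + 1) • vG n R (vG n L2 (vE n 1))
        = (vG n R (vG n L2' (vG n L1' (vE (n - 1) t')))) (2 * m + 1) •
          vG n R (vG n L2' (vE n 1)) := by
      funext q
      have := congrFun (congrFun hwd (2 * m + 1)) q
      simp only [wdg, f1, f1'] at this
      simpa using this
    have hsm : ∀ c : ℝ, c • vE n 1 = vE n c := by
      intro c; funext p; simp [vE]
    rw [← vG_smul, ← vG_smul, ← vG_smul, ← vG_smul, hsm, hsm] at hrow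
    have hrow := vG_inj _ _ _ _ hrow
    have hci := chain_inj n (2 * m + 2) (by omega) (n - 1) L2 L2' _ _ (by omega) h2 h2'
      (fun x hx => h0 x (by simp [hx])) (fun x hx => h0' x (by simp [hx])) f3 f3'
    rw [show n - 1 + 1 = n by omega] at hci
    obtain ⟨_, hL2⟩ := hci hrow
    subst hL2
    have hlam : ∃ lam : ℝ, vG n R (vG n L2 (vG n L1 (vE (n - 1) t))) =
        (1 : ℝ) • vG n R (vG n L2 (vG n L1' (vE (n - 1) t'))) +
          lam • vG n R (vG n L2 (vE n 1)) := by
      generalize vG n R (vG n L2 (vE n 1)) = y at *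
      generalize vG n R (vG n L2 (vG n L1 (vE (n - 1) t))) = x at *
      generalize vG n R (vG n L2 (vG n L1' (vE (n - 1) t'))) = x' at *
      refine ⟨(x (2 * m + 2) - x' (2 * m + 2)) / y (2 * m + 2), ?_⟩
      funext p
      have := congrFun (congrFun hwd p) (2 * m + 2)
      simp only [wdg] at this
      simp only [Pi.add_apply, Pi.smul_apply, smul_eq_mul]
      field_simp
      linarith
    obtain ⟨lam, hlam⟩ := hlam
    rw [← vG_lin, ← vG_lin] at hlam
    have hlam := vG_inj _ _ _ _ (vG_inj _ _ _ _ hlam)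
    have c1 := congrFun hlam n
    have e1 := chain_top n _ (n - 2) L1 t n h1 (by omega)
    have e2 := chain_top n _ (n - 2) L1' t' n h1' (by omega)
    rw [show n - 2 + 1 = n - 1 by omega] at e1 e2
    have hnn : n ≠ n - 1 := by omega
    simp only [Pi.add_apply, Pi.smul_apply, smul_eq_mul, e1, e2, vE, if_neg hnn] at c1
    have hl0 : lam = 0 := by simpa using c1.symm
    subst hl0
    have hci := chain_inj n (2 * m + 1) (by omega) (n - 2) L1 L1' t t' (by omega) h1 h1'
      (fun x hx => h0 x (by simp [hx])) (fun x hx => h0' x (by simp [hx]))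
      (h0 (n, t) (by simp)) (h0' (n, t') (by simp))
    rw [show n - 2 + 1 = n - 1 by omega] at hci
    obtain ⟨rfl, rfl⟩ := hci (by simpa using hlam)
    rfl

lemma wordD_eq (n : ℕ) : wordD n = wtail n 0 (n / 2) := by
  rw [wtail, ← List.range_eq_range']; rfl

lemma wtail_length (n k : ℕ) : ∀ m, m + k = n / 2 →
    (wtail n m k).length + 2 * k * (2 * m + k) = k * (2 * n - 1) := by
  induction k with
  | zero => intro m h; simp [wtail]
  | succ k ih =>
    intro m h
    have h1 := ih (m + 1) (by omega)
    have hw : wtail n m (k + 1) = blk n m ++ wtail n (m + 1) k := by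
      simp [wtail, List.range'_succ]
    have hb : (blk n m).length + 4 * m + 3 = 2 * n := by
      simp [blk, decRun]; omega
    rw [hw, List.length_append]
    obtain ⟨c, hc⟩ : ∃ c, 2 * n = c + 1 := ⟨2 * n - 1, by omega⟩
    rw [show 2 * n - 1 = c by omega] at *
    nlinarith

/-! ### Link with the matrices -/

def iL {n : ℕ} (p : Fin n) : Fin (2 * n) := ⟨(p : ℕ), by have := p.isLt; omega⟩
def iR {n : ℕ} (p : Fin n) : Fin (2 * n) := ⟨n + (p : ℕ), by have := p.isLt; omega⟩

lemma sum_two {n : ℕ} (f : Fin (2 * n) → ℝ) :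
    ∑ k, f k = ∑ k : Fin n, f (iL k) + ∑ k : Fin n, f (iR k) := by
  have e : n + n = 2 * n := by omega
  rw [← (finCongr e).sum_comp f, Fin.sum_univ_add]
  rfl

lemma sub_mul_two {n : ℕ} (M X : Matrix (Fin (2 * n)) (Fin (2 * n)) ℝ)
    (c : Fin n → Fin (2 * n)) :
    (M * X).submatrix iL c =
      M.submatrix iL iL * X.submatrix iL c + M.submatrix iL iR * X.submatrix iR c := by
  ext p q
  simp [Matrix.mul_apply, sum_two]

def uM (n i : ℕ) (t : ℝ) : Matrix (Fin n) (Fin n) ℝ :=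
  Matrix.of fun p q => (if p = q then 1 else 0) +
    if i < n ∧ (p : ℕ) + 1 = i ∧ (q : ℕ) = i then t else 0

lemma uM_mul (n i : ℕ) (t : ℝ) (A : Matrix (Fin n) (Fin n) ℝ) (p q : Fin n) :
    (uM n i t * A) p q = A p q +
      if h : i < n ∧ (p : ℕ) + 1 = i then t * A ⟨(p : ℕ) + 1, by omega⟩ q else 0 := by
  simp only [Matrix.mul_apply, uM, Matrix.of_apply, add_mul, Finset.sum_add_distrib]
  congr 1
  · simp
  · split_ifs with h
    · rw [Finset.sum_eq_single ⟨(p : ℕ) + 1, by omega⟩]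
      · simp [h]
      · intro b _ hb
        rw [if_neg, zero_mul]
        rintro ⟨_, h1, h2⟩
        apply hb; ext; simp; omega
      · simp
    · apply Finset.sum_eq_zero
      intro b _
      rw [if_neg, zero_mul]
      rintro ⟨h1, h2, _⟩
      exact h ⟨h1, h2⟩

lemma uM_inv (n i : ℕ) (t : ℝ) : uM n i t * uM n i (-t) = 1 := by
  ext p q
  rw [uM_mul]
  simp only [uM, Matrix.of_apply, Matrix.one_apply, Fin.ext_iff]
  split_ifs <;> first | omega | simp

lemma uM_det (n i : ℕ) (t : ℝ) : (uM n i t).det = 1 := by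
  rw [Matrix.det_of_isUpperTriangular]
  · apply Finset.prod_eq_one
    intro p _
    simp [uM]; omega
  · intro p q hpq
    simp only [id] at hpq
    have hpq' : (q : ℕ) < p := hpq
    simp only [uM, Matrix.of_apply, Fin.ext_iff]
    split_ifs <;> first | omega | simp

def qM (n i : ℕ) (t : ℝ) : Matrix (Fin n) (Fin n) ℝ :=
  Matrix.of fun p q => if i < n then 0 else wdg (vE (n - 1) t) (vE n 1) (p + 1) (q + 1)

lemma x_LL (n i : ℕ) (hn : 2 ≤ n) (hi : 1 ≤ i) (t : ℝ) : (xMat n i t).submatrix iL iL = uM n i t := by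
  ext p q
  have := p.isLt; have := q.isLt
  simp only [xMat, uM, iL, Matrix.submatrix_apply, Matrix.of_apply, Fin.ext_iff]
  split_ifs <;> first | omega | simp

lemma x_LR (n i : ℕ) (hn : 2 ≤ n) (t : ℝ) : (xMat n i t).submatrix iL iR = qM n i t := by
  ext p q
  have := p.isLt; have := q.isLt
  simp only [xMat, qM, iL, iR, Matrix.submatrix_apply, Matrix.of_apply, wdg, vE]
  split_ifs <;> first | omega | simp

lemma x_RL (n i : ℕ) (hi : 1 ≤ i) (t : ℝ) : (xMat n i t).submatrix iR iL = 0 := by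
  ext p q
  have := p.isLt; have := q.isLt
  simp only [xMat, iL, iR, Matrix.submatrix_apply, Matrix.of_apply, Matrix.zero_apply]
  split_ifs <;> first | omega | simp

lemma x_RR (n i : ℕ) (t : ℝ) : (xMat n i t).submatrix iR iR = (uM n i (-t))ᵀ := by
  ext p q
  have := p.isLt; have := q.isLt
  simp only [xMat, uM, iR, Matrix.submatrix_apply, Matrix.of_apply, Matrix.transpose_apply,
    Fin.ext_iff]
  split_ifs <;> first | omega | simp

def fMat (n : ℕ) (B : ℕ → ℕ → ℝ) : Matrix (Fin n) (Fin n) ℝ :=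
  Matrix.of fun p q => B (p + 1) (q + 1)

lemma fMat_fact (n i : ℕ) (t : ℝ) (B : ℕ → ℕ → ℝ) :
    fMat n (fact n i t B) = uM n i (-t) * fMat n B * (uM n i (-t))ᵀ + qM n i t := by
  have h : ∀ (A : Matrix (Fin n) (Fin n) ℝ) (p q : Fin n), (A * (uM n i (-t))ᵀ) p q =
      (uM n i (-t) * Aᵀ) q p := by
    intro A p q
    rw [← Matrix.transpose_apply (uM n i (-t) * Aᵀ), Matrix.transpose_mul, Matrix.transpose_transpose]
  ext p q
  rw [Matrix.add_apply, h, uM_mul]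
  simp only [Matrix.transpose_apply, uM_mul]
  simp only [fMat, fact, qM, vT, Matrix.of_apply]
  congr 1
  split_ifs <;> ring

lemma link (n : ℕ) (hn : 2 ≤ n) (L : List (ℕ × ℝ)) : (∀ x ∈ L, 1 ≤ x.1) →
    (((L.map (fun x => xMat n x.1 x.2)).prod).submatrix iL iL).det = 1 ∧
    ((L.map (fun x => xMat n x.1 x.2)).prod).submatrix iL iR =
      ((L.map (fun x => xMat n x.1 x.2)).prod).submatrix iL iL * fMat n (frun n L 0) := by
  induction L using List.reverseRecOn with
  | nil =>
    intro _
    constructor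
    · have : ((1 : Matrix (Fin (2 * n)) (Fin (2 * n)) ℝ)).submatrix iL iL
        = (1 : Matrix (Fin n) (Fin n) ℝ) := by
        ext p q; simp [Matrix.one_apply, iL, Fin.ext_iff]
      simp [this]
    · ext p q
      have : fMat n (frun n [] 0) = 0 := rfl
      have hp := p.isLt
      rw [this]
      simp [Matrix.one_apply, iL, iR]; omega
  | append_singleton L x ih =>
    intro h
    obtain ⟨h1, h2⟩ := ih (fun y hy => h y (by simp [hy]))
    have hx : 1 ≤ x.1 := h x (by simp)
    rw [List.map_append, List.prod_append, frun_append]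
    simp only [List.map_cons, List.map_nil, List.prod_cons, List.prod_nil, mul_one, frun]
    generalize (L.map (fun x => xMat n x.1 x.2)).prod = M at *
    rw [sub_mul_two, sub_mul_two, x_LL n _ hn hx, x_LR n _ hn, x_RL n _ hx, x_RR, fMat_fact]
    refine ⟨by simp [h1, uM_det], ?_⟩
    have hq : uM n x.1 x.2 * qM n x.1 x.2 = qM n x.1 x.2 := by
      by_cases hxn : x.1 < n
      · have : qM n x.1 x.2 = 0 := by ext p q; simp [qM, hxn]
        rw [this]; simp
      · have : uM n x.1 x.2 = 1 := by ext p q; simp [uM, hxn, Matrix.one_apply]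
        rw [this]; simp
    rw [h2]
    simp only [mul_zero, add_zero, mul_add, Matrix.mul_assoc, hq]
    rw [← Matrix.mul_assoc (uM n x.1 x.2) (uM n x.1 (-x.2)), uM_inv, one_mul]
    abel

def pL (n : ℕ) (t : ℕ → ℝ) : List (ℕ × ℝ) :=
  (List.range (Npar n)).map (fun l => ((wordD n).getD l 0, t l))

lemma pL_fst (n : ℕ) (t : ℕ → ℝ) : (pL n t).map Prod.fst = wordD n := by
  apply List.ext_getElem
  · simp [pL, wordD_length]
  · intro i h1 h2
    simp [pL, h2]

lemma Amat_eq (n : ℕ) (hn : 2 ≤ n) (t : ℕ → ℝ) : Amat n t = fMat n (frun n (pL n t) 0) := by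
  have hp : prodX n t = ((pL n t).map (fun x => xMat n x.1 x.2)).prod := by
    simp [prodX, pL, List.map_map, Function.comp_def]
  have h := link n hn (pL n t) (by
    intro x hx
    have := mem_of_map _ _ (pL_fst n t) x hx
    rw [wordD_eq] at this
    have := mem_wtail n 0 (n / 2) _ (by omega) this
    omega)
  rw [← hp] at h
  have e1 : (prodX n t).submatrix iL iL = X1 n t := rfl
  have e2 : (prodX n t).submatrix iL iR = X2 n t := rfl
  rw [e1, e2] at h
  rw [Amat, h.2, ← Matrix.mul_assoc, Matrix.nonsing_inv_mul _ (by rw [h.1]; exact isUnit_one), one_mul]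

lemma fact_skew (n i : ℕ) (t : ℝ) (B : ℕ → ℕ → ℝ) (h : ∀ p q, B p q = - B q p) :
    ∀ p q, fact n i t B p q = - fact n i t B q p := by
  intro p q
  simp only [fact, vT, wdg]
  rw [h p q, h p (q + 1), h (p + 1) q, h (p + 1) (q + 1)]
  split_ifs <;> ring

lemma frun_skew (n : ℕ) (L : List (ℕ × ℝ)) (B : ℕ → ℕ → ℝ) (h : ∀ p q, B p q = - B q p) :
    ∀ p q, frun n L B p q = - frun n L B q p := by
  induction L generalizing B with
  | nil => exact h
  | cons x L ih => exact ih _ (fact_skew n _ _ B h)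

lemma Amat_skew (n : ℕ) (hn : 2 ≤ n) (t : ℕ → ℝ) : (Amat n t)ᵀ = - Amat n t := by
  rw [Amat_eq n hn]
  ext p q
  simpa [fMat] using frun_skew n (pL n t) 0 (by simp) (q + 1) (p + 1)

/-- vanishing outside the range -/
lemma frun_out (n : ℕ) (hn : 2 ≤ n) (L : List (ℕ × ℝ)) (hL : ∀ x ∈ L, 1 ≤ x.1) (B : ℕ → ℕ → ℝ)
    (hB : ∀ p q, (p = 0 ∨ n < p ∨ q = 0 ∨ n < q) → B p q = 0) :
    ∀ p q, (p = 0 ∨ n < p ∨ q = 0 ∨ n < q) → frun n L B p q = 0 := by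
  induction L generalizing B with
  | nil => exact hB
  | cons x L ih =>
    apply ih (fun y hy => hL y (List.mem_cons_of_mem _ hy))
    intro p q h
    have hx := hL x List.mem_cons_self
    simp only [fact, vT, wdg, vE]
    rw [hB p q h]
    by_cases h1 : p = 0 ∨ n < p
    · rw [hB p (q + 1) (by tauto)]
      split_ifs <;> first | omega | simp
    · rw [hB (p + 1) q (by tauto)]
      split_ifs <;> first | omega | simp

lemma Amat_inj (n : ℕ) (hn : 2 ≤ n) (t t' : ℕ → ℝ) (ht : ∀ l < Npar n, t l ≠ 0)
    (ht' : ∀ l < Npar n, t' l ≠ 0) (h : Amat n t = Amat n t') : ∀ l < Npar n, t l = t' l := by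
  rw [Amat_eq n hn, Amat_eq n hn] at h
  have hpos : ∀ t, ∀ x ∈ pL n t, 1 ≤ x.1 := by
    intro t x hx
    have := mem_of_map _ _ (pL_fst n t) x hx
    rw [wordD_eq] at this
    have := mem_wtail n 0 (n / 2) _ (by omega) this
    omega
  have hrun : frun n (pL n t) 0 = frun n (pL n t') 0 := by
    funext p q
    by_cases hpq : p = 0 ∨ n < p ∨ q = 0 ∨ n < q
    · rw [frun_out n hn _ (hpos t) 0 (fun _ _ _ => rfl) p q hpq,
        frun_out n hn _ (hpos t') 0 (fun _ _ _ => rfl) p q hpq]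
    · have := congrFun (congrFun h ⟨p - 1, by omega⟩) ⟨q - 1, by omega⟩
      simp only [fMat, Matrix.of_apply] at this
      rwa [show p - 1 + 1 = p by omega, show q - 1 + 1 = q by omega] at this
  have hne : ∀ t : ℕ → ℝ, (∀ l < Npar n, t l ≠ 0) → ∀ x ∈ pL n t, x.2 ≠ 0 := by
    intro t ht x hx
    simp only [pL, List.mem_map, List.mem_range] at hx
    obtain ⟨l, hl, rfl⟩ := hx
    exact ht l hl
  have := frun_inj n hn (n / 2) 0 (pL n t) (pL n t') (by omega)
    (by rw [pL_fst, wordD_eq]) (by rw [pL_fst, wordD_eq]) (hne t ht) (hne t' ht') hrun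
  intro l hl
  have h2 := List.map_inj_left.1 this l (List.mem_range.2 hl)
  exact congrArg Prod.snd h2

/-! ### Polynomiality -/

def IsPolyF {N : ℕ} (g : (Fin N → ℝ) → ℝ) : Prop :=
  ∃ F : MvPolynomial (Fin N) ℝ, ∀ t, MvPolynomial.eval t F = g t

lemma IsPolyF.add {N : ℕ} {g h : (Fin N → ℝ) → ℝ} (hg : IsPolyF g) (hh : IsPolyF h) :
    IsPolyF (fun t => g t + h t) := by
  obtain ⟨F, hF⟩ := hg; obtain ⟨H, hH⟩ := hh
  exact ⟨F + H, fun t => by simp [hF, hH]⟩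

lemma IsPolyF.sub {N : ℕ} {g h : (Fin N → ℝ) → ℝ} (hg : IsPolyF g) (hh : IsPolyF h) :
    IsPolyF (fun t => g t - h t) := by
  obtain ⟨F, hF⟩ := hg; obtain ⟨H, hH⟩ := hh
  exact ⟨F - H, fun t => by simp [hF, hH]⟩

lemma IsPolyF.mul {N : ℕ} {g h : (Fin N → ℝ) → ℝ} (hg : IsPolyF g) (hh : IsPolyF h) :
    IsPolyF (fun t => g t * h t) := by
  obtain ⟨F, hF⟩ := hg; obtain ⟨H, hH⟩ := hh
  exact ⟨F * H, fun t => by simp [hF, hH]⟩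

lemma IsPolyF.const {N : ℕ} (c : ℝ) : IsPolyF (fun _ : Fin N → ℝ => c) :=
  ⟨MvPolynomial.C c, fun t => by simp⟩

lemma IsPolyF.ite {N : ℕ} {g h : (Fin N → ℝ) → ℝ} (P : Prop) [Decidable P] (hg : IsPolyF g)
    (hh : IsPolyF h) : IsPolyF (fun t => if P then g t else h t) := by
  by_cases hP : P
  · simpa [hP] using hg
  · simpa [hP] using hh

lemma frun_poly {N : ℕ} (n : ℕ) (L : List (ℕ × ((Fin N → ℝ) → ℝ))) (hL : ∀ x ∈ L, IsPolyF x.2)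
    (B : (Fin N → ℝ) → ℕ → ℕ → ℝ) (hB : ∀ p q, IsPolyF (fun t => B t p q)) :
    ∀ p q, IsPolyF (fun t => frun n (L.map (fun x => (x.1, x.2 t))) (B t) p q) := by
  induction L generalizing B with
  | nil => exact hB
  | cons x L ih =>
    apply ih (fun y hy => hL y (List.mem_cons_of_mem _ hy))
      (fun t => fact n x.1 (x.2 t) (B t))
    intro p q
    have hx := hL x List.mem_cons_self
    have hT : ∀ (v : (Fin N → ℝ) → ℕ → ℝ), (∀ p, IsPolyF (fun t => v t p)) →
        ∀ p, IsPolyF (fun t => vT n x.1 (x.2 t) (v t) p) := fun v hv p =>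
      (hv p).sub (IsPolyF.ite _ (hx.mul (hv _)) (IsPolyF.const 0))
    have hE : ∀ k p, IsPolyF (fun t => vE k (x.2 t) p) := fun k p =>
      IsPolyF.ite _ hx (IsPolyF.const 0)
    have hE1 : ∀ k p, IsPolyF (fun _ : Fin N → ℝ => vE k 1 p) := fun k p => IsPolyF.const _
    exact (hT _ (fun p' => hT (fun t => B t p') (fun q' => hB p' q') q) p).add
      (IsPolyF.ite _ (IsPolyF.const 0)
        (((hE _ _).mul (hE1 _ _)).sub ((hE _ _).mul (hE1 _ _))))

def extT {N : ℕ} (t : Fin N → ℝ) (l : ℕ) : ℝ := if h : l < N then t ⟨l, h⟩ else 0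

lemma Amat_poly (n : ℕ) (hn : 2 ≤ n) (p q : Fin n) :
    IsPolyF (fun t : Fin (Npar n) → ℝ => Amat n (extT t) p q) := by
  have h := frun_poly (N := Npar n) n ((List.range (Npar n)).map
    (fun l => ((wordD n).getD l 0, fun t : Fin (Npar n) → ℝ => extT t l))) (by
      intro x hx
      simp only [List.mem_map, List.mem_range] at hx
      obtain ⟨l, hl, rfl⟩ := hx
      exact ⟨MvPolynomial.X ⟨l, hl⟩, fun t => by simp [extT, hl]⟩)
    (fun _ => 0) (fun _ _ => IsPolyF.const 0) (p + 1) (q + 1)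
  obtain ⟨F, hF⟩ := h
  refine ⟨F, fun t => ?_⟩
  rw [hF]
  beta_reduce
  rw [Amat_eq n hn]
  simp [fMat, pL, List.map_map, Function.comp_def]

/-- No family of fewer than `n(n-1)/2` polynomials in the above-diagonal
entries of a skew-symmetric matrix can test membership in `S_n^{>0}` by positivity. -/
theorem no_smaller_positivity_test (n : ℕ) (hn : 2 ≤ n) :
    ¬ ∃ r : ℕ, r < Npar n ∧
      ∃ f : Fin r → MvPolynomial { pq : Fin n × Fin n // pq.1 < pq.2 } ℝ,
        ∀ A : Matrix (Fin n) (Fin n) ℝ, Aᵀ = -A →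
          (A ∈ Spos n ↔
            ∀ i : Fin r, 0 < MvPolynomial.eval (fun v => A v.1.1 v.1.2) (f i)) := by
  rintro ⟨r, hr, f, hf⟩
  choose a ha using fun v : { pq : Fin n × Fin n // pq.1 < pq.2 } =>
    Amat_poly n hn v.1.1 v.1.2
  let F : Fin r → MvPolynomial (Fin (Npar n)) ℝ := fun i => MvPolynomial.bind₁ a (f i)
  have hF : ∀ i t, MvPolynomial.eval t (F i) =
      MvPolynomial.eval (fun v => Amat n (extT t) v.1.1 v.1.2) (f i) := by
    intro i t
    have h1 : (fun v => MvPolynomial.eval t (a v)) =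
        (fun v : { pq : Fin n × Fin n // pq.1 < pq.2 } => Amat n (extT t) v.1.1 v.1.2) := by
      funext v; exact ha v t
    rw [← h1]
    simp only [F, MvPolynomial.eval, MvPolynomial.eval₂Hom_bind₁]
  have hpos : ∀ t : Fin (Npar n) → ℝ, (∀ j, 0 < t j) → ∀ i, 0 < MvPolynomial.eval t (F i) := by
    intro t ht i
    rw [hF]
    refine (hf (Amat n (extT t)) (Amat_skew n hn _)).1 ⟨extT t, ?_, rfl⟩ i
    intro l hl
    simp only [extT, hl, dif_pos]
    exact ht _
  have hF0 : ∀ i, F i ≠ 0 := by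
    intro i h
    have := hpos (fun _ => 1) (fun _ => one_pos) i
    rw [h] at this
    simp at this
  obtain ⟨ε, hε, e, c, H⟩ := fan_lemma (Npar n) F hF0
  obtain ⟨σ, hσ, hσ1⟩ := exists_sign hr e
  have hpos' : ∀ i, 0 < MvPolynomial.eval (fun j => ((σ j : ℤ) : ℝ) * ε j) (F i) := by
    intro i
    have h1 := H i σ
    have h2 := H i 1
    rw [hσ1] at h1
    simp only [Pi.one_apply, one_pow, Finset.prod_const_one, Units.val_one, Int.cast_one, mul_one,
      one_mul] at h1 h2
    have hc : 0 < c i := (pos_iff_pos_of_mul_pos h2).1 (hpos ε hε i)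
    exact (pos_iff_pos_of_mul_pos h1).2 hc
  have hmem := (hf (Amat n (extT (fun j => ((σ j : ℤ) : ℝ) * ε j))) (Amat_skew n hn _)).2
    (fun i => by rw [← hF]; exact hpos' i)
  obtain ⟨t', ht', heq⟩ := hmem
  have hne : ∀ l < Npar n, extT (fun j => ((σ j : ℤ) : ℝ) * ε j) l ≠ 0 := by
    intro l hl
    simp only [extT, hl, dif_pos]
    exact mul_ne_zero (by simp) (hε _).ne'
  have hinj := Amat_inj n hn _ t' hne (fun l hl => (ht' l hl).ne') heq
  apply hσ
  funext j
  have h1 := hinj j j.isLt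
  have h2 := ht' j j.isLt
  rw [← h1] at h2
  simp only [extT, j.isLt, dif_pos] at h2
  rcases Int.units_eq_one_or (σ j) with h | h
  · exact h
  · rw [h] at h2
    have := hε j
    simp at h2
    linarith
end
end
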